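/- arXiv:2210.00711 — 2 statements merged into one kernel-verified Lean document; each statement's English description precedes it below -/
import Mathlib

section
/- Let R = k[X11,X12,X21,X22]/(X11X22 − X12X21), p = (x12, x11), and ℓ ≥ 1. Then Hom_R(p^ℓ, p^ℓ) ≅ R and Ext^1_R(p^ℓ, p^ℓ) = 0, while Ext^2_R(p^ℓ, p^ℓ) ≠ 0; i.e., p^ℓ is exactly 1-semidualizing. -/
open CategoryTheory MvPolynomial

noncomputable section ExtComp
open CategoryTheory.Projective CategoryTheory.Limits
universe u
variable {C : Type*} [Category C] [Abelian C] [EnoughProjectives C] {M : C}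
  {P0 P1 P2 : C} (d0 : P1 ⟶ P0) (d1 : P2 ⟶ P1) (ε : P0 ⟶ M)
  (s : d1 ≫ d0 = 0) (w : d0 ≫ ε = 0)

lemma d_comp_self {X Y : C} (f : X ⟶ Y) : Projective.d f ≫ f = 0 :=
  (Category.assoc (Projective.π (kernel f)) (kernel.ι f) f).trans
    ((congrArg _ (kernel.condition f)).trans comp_zero)

def resComplex : ChainComplex (C) ℕ :=
  ChainComplex.mk P0 P1 P2 d0 d1 s (fun S => ⟨_, Projective.d S.f, d_comp_self S.f⟩)

lemma resComplex_exactAt_one (h : (ShortComplex.mk d1 d0 s).Exact) :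
    (resComplex d0 d1 s).ExactAt 1 := by
  rw [HomologicalComplex.exactAt_iff' _ 2 1 0 (by simp) (by simp)]
  refine (ShortComplex.exact_iff_of_iso ?_).2 h
  exact ShortComplex.isoMk (Iso.refl _) (Iso.refl _) (Iso.refl _)
    (by
      have : (resComplex d0 d1 s).d 2 1 = d1 := ChainComplex.mk_d_2_1 _ _ _ _ _ _ _
      dsimp [HomologicalComplex.sc', HomologicalComplex.shortComplexFunctor']
      rw [this]
      exact (Category.id_comp d1).trans (Category.comp_id d1).symm)
    (by
      have : (resComplex d0 d1 s).d 1 0 = d0 := ChainComplex.mk_d_1_0 _ _ _ _ _ _ _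
      dsimp [HomologicalComplex.sc', HomologicalComplex.shortComplexFunctor']
      rw [this]
      exact (Category.id_comp d0).trans (Category.comp_id d0).symm)

lemma resComplex_exactAt_succ (n : ℕ) :
    (resComplex d0 d1 s).ExactAt (n + 2) := by
  rw [HomologicalComplex.exactAt_iff' _ (n + 3) (n + 2) (n + 1) (by simp) (by simp)]
  have := exact_d_f ((resComplex d0 d1 s).d (n+2) (n+1))
  refine (ShortComplex.exact_iff_of_iso ?_).2 this
  let i : (resComplex d0 d1 s).X (n+3) ≅ syzygies ((resComplex d0 d1 s).d (n+2) (n+1)) :=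
    ChainComplex.mkXIso P0 P1 P2 d0 d1 s
      (fun S => ⟨_, Projective.d S.f, d_comp_self S.f⟩) n
  have hi : (resComplex d0 d1 s).d (n+3) (n+2) =
      i.hom ≫ Projective.d ((resComplex d0 d1 s).d (n+2) (n+1)) :=
    ChainComplex.mk_d P0 P1 P2 d0 d1 s
      (fun S => ⟨_, Projective.d S.f, d_comp_self S.f⟩) n
  refine ShortComplex.isoMk i (Iso.refl _) (Iso.refl _) ?_ ?_
  · dsimp [HomologicalComplex.sc', HomologicalComplex.shortComplexFunctor']
    rw [hi, Category.comp_id]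
  · simp [HomologicalComplex.sc', HomologicalComplex.shortComplexFunctor']

lemma resComplex_projective [Projective P0] [Projective P1] [Projective P2] (n : ℕ) :
    Projective ((resComplex d0 d1 s).X n) := by
  obtain (_ | _ | _ | n) := n
  · assumption
  · assumption
  · assumption
  · exact Projective.of_iso (ChainComplex.mkXIso _ _ _ _ _ _ _ n).symm (by dsimp; infer_instance)

def resOf {M : C} (K : ChainComplex C ℕ) (hp : ∀ n, Projective (K.X n)) (π : K.X 0 ⟶ M)
    (w : K.d 1 0 ≫ π = 0) (h0 : (ShortComplex.mk _ _ w).Exact) [Epi π]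
    (hK : ∀ n, K.ExactAt (n + 1)) : ProjectiveResolution M where
  complex := K
  projective := hp
  π := (ChainComplex.toSingle₀Equiv _ _).symm ⟨π, w⟩
  quasiIso := ⟨fun n => by
    obtain (_ | n) := n
    · rw [ChainComplex.quasiIsoAt₀_iff, ShortComplex.quasiIso_iff_of_zeros']
      · refine (ShortComplex.exact_and_epi_g_iff_of_iso ?_).2
          ⟨h0, by dsimp; infer_instance⟩
        refine ShortComplex.isoMk (Iso.refl _) (Iso.refl _) (Iso.refl _)
          ((Category.id_comp (K.d 1 0)).trans (Category.comp_id (K.d 1 0)).symm) ?_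
        exact (Category.id_comp π).trans ((Category.comp_id π).symm.trans
          (congrArg (· ≫ 𝟙 M) (ChainComplex.toSingle₀Equiv_symm_apply_f_zero π w).symm))
      · exact K.shape 0 0 (by simp)
      all_goals rfl
    · rw [quasiIsoAt_iff_exactAt']
      · apply hK
      · apply ChainComplex.exactAt_succ_single_obj⟩

lemma resComplex_d_1_0 : (resComplex d0 d1 s).d 1 0 = d0 := ChainComplex.mk_d_1_0 _ _ _ _ _ _ _

lemma resComplex_d_2_1 : (resComplex d0 d1 s).d 2 1 = d1 := ChainComplex.mk_d_2_1 _ _ _ _ _ _ _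

def res [Projective P0] [Projective P1] [Projective P2] (h1 : (ShortComplex.mk d1 d0 s).Exact)
    (h0 : (ShortComplex.mk d0 ε w).Exact) [Epi ε] : ProjectiveResolution M :=
  haveI : Epi (X := (resComplex d0 d1 s).X 0) ε := ‹Epi ε›
  resOf (resComplex d0 d1 s) (resComplex_projective d0 d1 s) ε
    ((congrArg (fun t : P1 ⟶ P0 => t ≫ ε) (resComplex_d_1_0 d0 d1 s)).trans w)
    (by
      refine (ShortComplex.exact_iff_of_iso ?_).2 h0
      refine ShortComplex.isoMk (Iso.refl _) (Iso.refl _) (Iso.refl _) ?_ ?_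
      · exact (Category.id_comp d0).trans ((Category.comp_id d0).symm.trans
          (congrArg (fun t : P1 ⟶ P0 => t ≫ 𝟙 P0) (resComplex_d_1_0 d0 d1 s).symm))
      · exact (Category.id_comp ε).trans (Category.comp_id ε).symm)
    (fun n => by
      obtain (_ | n) := n
      · exact resComplex_exactAt_one _ _ _ h1
      · exact resComplex_exactAt_succ _ _ _ _)

lemma ext_subsingleton_iff {R : Type u} [CommRing R] {M : ModuleCat.{u} R} (P : ProjectiveResolution M) (N : ModuleCat.{u} R) (n : ℕ) :
   Subsingleton (((Ext R (ModuleCat.{u} R) (n+1)).obj (Opposite.op M)).obj N) ↔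
    ∀ f : P.complex.X (n+1) ⟶ N, P.complex.d (n+2) (n+1) ≫ f = 0 →
      ∃ g : P.complex.X n ⟶ N, P.complex.d (n+1) n ≫ g = f := by
  rw [← ModuleCat.isZero_iff_subsingleton, (P.isoExt (n+1) N).isZero_iff,
    ← HomologicalComplex.exactAt_iff_isZero_homology,
    HomologicalComplex.exactAt_iff' _ n (n+1) (n+2) (by simp) (by simp),
    ShortComplex.moduleCat_exact_iff]
  constructor
  · intro h f hf
    obtain ⟨g, hg⟩ := h f hf
    exact ⟨g, hg⟩
  · intro h f hf
    obtain ⟨g, hg⟩ := h f hf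
    exact ⟨g, hg⟩

section
variable {R : Type u} [CommRing R] {M N Q0 Q1 Q2 : Type u} [AddCommGroup M] [Module R M]
  [AddCommGroup N] [Module R N] [AddCommGroup Q0] [Module R Q0] [AddCommGroup Q1] [Module R Q1]
  [AddCommGroup Q2] [Module R Q2] [Module.Projective R Q0] [Module.Projective R Q1]
  [Module.Projective R Q2]
  (f0 : Q1 →ₗ[R] Q0) (f1 : Q2 →ₗ[R] Q1) (η : Q0 →ₗ[R] M)

lemma ext_one_subsingleton (h1 : Function.Exact f1 f0) (h0 : Function.Exact f0 η)
    (hs : Function.Surjective η)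
    (H : ∀ f : Q1 →ₗ[R] N, f ∘ₗ f1 = 0 → ∃ g : Q0 →ₗ[R] N, g ∘ₗ f0 = f) :
    Subsingleton (((Ext R (ModuleCat.{u} R) 1).obj (Opposite.op (ModuleCat.of R M))).obj
      (ModuleCat.of R N)) := by
  have : Epi (ModuleCat.ofHom η) := (ModuleCat.epi_iff_surjective _).2 hs
  have s : ModuleCat.ofHom f1 ≫ ModuleCat.ofHom f0 = 0 := by
    ext x; exact h1.apply_apply_eq_zero x
  have w : ModuleCat.ofHom f0 ≫ ModuleCat.ofHom η = 0 := by
    ext x; exact h0.apply_apply_eq_zero x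
  rw [ext_subsingleton_iff (res (ModuleCat.ofHom f0) (ModuleCat.ofHom f1) (ModuleCat.ofHom η) s w
    ((ShortComplex.ShortExact.moduleCat_exact_iff_function_exact _).2 h1)
    ((ShortComplex.ShortExact.moduleCat_exact_iff_function_exact _).2 h0)) (ModuleCat.of R N) 0]
  intro f hf
  obtain ⟨g, hg⟩ := H (ModuleCat.Hom.hom f) (by
    have : ModuleCat.ofHom f1 ≫ f = 0 :=
      (congrArg (fun t : ModuleCat.of R Q2 ⟶ ModuleCat.of R Q1 => t ≫ f)
        (resComplex_d_2_1 _ _ s).symm).trans hf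
    exact congrArg ModuleCat.Hom.hom this)
  refine ⟨ModuleCat.ofHom g, ?_⟩
  refine (congrArg (fun t : ModuleCat.of R Q1 ⟶ ModuleCat.of R Q0 => t ≫ ModuleCat.ofHom g)
        (resComplex_d_1_0 _ _ s)).trans ?_
  exact ModuleCat.hom_ext hg

lemma ext_two_factor (h1 : Function.Exact f1 f0) (h0 : Function.Exact f0 η)
    (hs : Function.Surjective η)
    (H : Subsingleton (((Ext R (ModuleCat.{u} R) 2).obj (Opposite.op (ModuleCat.of R M))).obj
      (ModuleCat.of R N)))
    (f : Q2 →ₗ[R] N) (hf : LinearMap.ker f1 ≤ LinearMap.ker f) : ∃ g : Q1 →ₗ[R] N, g ∘ₗ f1 = f := by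
  have : Epi (ModuleCat.ofHom η) := (ModuleCat.epi_iff_surjective _).2 hs
  have s : ModuleCat.ofHom f1 ≫ ModuleCat.ofHom f0 = 0 := by
    ext x; exact h1.apply_apply_eq_zero x
  have w : ModuleCat.ofHom f0 ≫ ModuleCat.ofHom η = 0 := by
    ext x; exact h0.apply_apply_eq_zero x
  rw [ext_subsingleton_iff (res (ModuleCat.ofHom f0) (ModuleCat.ofHom f1) (ModuleCat.ofHom η) s w
    ((ShortComplex.ShortExact.moduleCat_exact_iff_function_exact _).2 h1)
    ((ShortComplex.ShortExact.moduleCat_exact_iff_function_exact _).2 h0)) (ModuleCat.of R N) 1] at H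
  have e21 := resComplex_d_2_1 (ModuleCat.ofHom f0) (ModuleCat.ofHom f1) s
  obtain ⟨g, hg⟩ := H (ModuleCat.ofHom f) (by
    refine ModuleCat.hom_ext (LinearMap.ext fun x => ?_)
    have h := (resComplex (ModuleCat.ofHom f0) (ModuleCat.ofHom f1) s).d_comp_d 3 2 1
    have h' := congrArg (fun t => ModuleCat.Hom.hom t x) h
    refine hf (?_ : f1 _ = 0)
    have e := congrArg (fun t : ModuleCat.of R Q2 ⟶ ModuleCat.of R Q1 => ModuleCat.Hom.hom t
      (ModuleCat.Hom.hom ((resComplex (ModuleCat.ofHom f0) (ModuleCat.ofHom f1) s).d 3 2) x)) e21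
    exact e.symm.trans h')
  have hg' : ModuleCat.ofHom f1 ≫ g = ModuleCat.ofHom f :=
    (congrArg (fun t : ModuleCat.of R Q2 ⟶ ModuleCat.of R Q1 => t ≫ g) e21.symm).trans hg
  exact ⟨ModuleCat.Hom.hom g, congrArg ModuleCat.Hom.hom hg'⟩
end
end ExtComp

noncomputable section Model
variable (k : Type) [Field k]

/-- weights -/
def wt : Fin 4 → ℤ := ![1, 1, -1, -1]

lemma weight_wt (m : Fin 4 →₀ ℕ) :
    Finsupp.weight wt m = (m 0 : ℤ) + m 1 - m 2 - m 3 := by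
  rw [Finsupp.weight_apply, Finsupp.sum_fintype _ _ (by simp)]
  simp [Fin.sum_univ_four, wt]
  ring

/-- homogeneous elements -/
def W (m : ℤ) (f : MvPolynomial (Fin 4) k) : Prop := IsWeightedHomogeneous wt f m

variable {k}

lemma W.mul {m n : ℤ} {f g : MvPolynomial (Fin 4) k} (hf : W k m f) (hg : W k n g) :
    W k (m + n) (f * g) := IsWeightedHomogeneous.mul hf hg

lemma W.add {m : ℤ} {f g : MvPolynomial (Fin 4) k} (hf : W k m f) (hg : W k m g) :
    W k m (f + g) := (weightedHomogeneousSubmodule k wt m).add_mem hf hg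

lemma W.sub {m : ℤ} {f g : MvPolynomial (Fin 4) k} (hf : W k m f) (hg : W k m g) :
    W k m (f - g) := (weightedHomogeneousSubmodule k wt m).sub_mem hf hg

lemma W.neg {m : ℤ} {f : MvPolynomial (Fin 4) k} (hf : W k m f) :
    W k m (-f) := (weightedHomogeneousSubmodule k wt m).neg_mem hf

lemma W.zero {m : ℤ} : W k m 0 := (weightedHomogeneousSubmodule k wt m).zero_mem

lemma W_X (i : Fin 4) : W k (wt i) (X i) := isWeightedHomogeneous_X k wt i

lemma W_pow {m : ℤ} {f : MvPolynomial (Fin 4) k} (hf : W k m f) (n : ℕ) :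
    W k (n * m) (f ^ n) := by
  have := IsWeightedHomogeneous.pow hf n
  rwa [nsmul_eq_mul] at this

lemma W.of_X_mul {m : ℤ} {i : Fin 4} {f : MvPolynomial (Fin 4) k} (h : W k m (X i * f)) :
    W k (m - wt i) f := by
  intro d hd
  have := @h (Finsupp.single i 1 + d) (by rwa [coeff_X_mul])
  rw [map_add, Finsupp.weight_single] at this
  simp at this
  linarith

lemma W.of_X_pow_mul {i : Fin 4} {f : MvPolynomial (Fin 4) k} (n : ℕ) {m : ℤ}
    (h : W k m (X i ^ n * f)) : W k (m - n * wt i) f := by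
  induction n generalizing m with
  | zero => simpa using h
  | succ n ih =>
    rw [pow_succ', mul_assoc] at h
    have := ih h.of_X_mul
    convert this using 1
    push_cast; ring

lemma W_decomp {m : ℤ} (i j : Fin 4) (p q : ℕ)
    (H : ∀ d : Fin 4 →₀ ℕ, (d 0 : ℤ) + d 1 - d 2 - d 3 = m → p ≤ d i ∨ q ≤ d j)
    {f : MvPolynomial (Fin 4) k} (hf : W k m f) :
    ∃ g h, W k (m - p * wt i) g ∧ W k (m - q * wt j) h ∧ f = X i ^ p * g + X j ^ q * h := by
  have key : ∀ (i : Fin 4) (p : ℕ) (d : Fin 4 →₀ ℕ) (c : k), p ≤ d i →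
      monomial d c = X i ^ p * monomial (d - Finsupp.single i p) c := by
    intro i p d c h
    rw [X_pow_eq_monomial, monomial_mul, one_mul, add_tsub_cancel_of_le]
    rwa [Finsupp.single_le_iff]
  have hw : ∀ d : Fin 4 →₀ ℕ, ∀ c : k, Finsupp.weight wt d = m → W k m (monomial d c) :=
    fun d c h => isWeightedHomogeneous_monomial wt d c h
  rw [f.as_sum]
  apply Finset.sum_induction _ (fun f => ∃ g h, W k (m - p * wt i) g ∧ W k (m - q * wt j) h ∧
    f = X i ^ p * g + X j ^ q * h)
  · rintro _ _ ⟨g, h, hg, hh, rfl⟩ ⟨g', h', hg', hh', rfl⟩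
    exact ⟨g + g', h + h', hg.add hg', hh.add hh', by ring⟩
  · exact ⟨0, 0, W.zero, W.zero, by ring⟩
  · intro d hd
    have hd' := hf (mem_support_iff.1 hd)
    have hm := hw d (coeff d f) hd'
    rw [weight_wt] at hd'
    rcases H d hd' with h | h
    · rw [key i p d _ h] at hm ⊢
      exact ⟨_, 0, hm.of_X_pow_mul, W.zero, by ring⟩
    · rw [key j q d _ h] at hm ⊢
      exact ⟨0, _, W.zero, hm.of_X_pow_mul, by ring⟩

lemma mon_eq (i j p q : ℕ) : (monomial (Finsupp.equivFunOnFinite.symm ![i, j, p, q]) 1 :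
    MvPolynomial (Fin 4) k) = X 0 ^ i * X 1 ^ j * X 2 ^ p * X 3 ^ q := by
  rw [monomial_eq, Finsupp.prod_fintype _ _ (by simp)]
  simp [Fin.prod_univ_four]

lemma mon_eq' (m : Fin 4 →₀ ℕ) : (monomial m 1 :
    MvPolynomial (Fin 4) k) = X 0 ^ m 0 * X 1 ^ m 1 * X 2 ^ m 2 * X 3 ^ m 3 := by
  rw [monomial_eq, Finsupp.prod_fintype _ _ (by simp)]
  simp [Fin.prod_univ_four]

lemma monA_eq (m : Fin 2 × Fin 2 →₀ ℕ) : (monomial m 1 : MvPolynomial (Fin 2 × Fin 2) k) =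
    X (0,0) ^ m (0,0) * X (0,1) ^ m (0,1) * (X (1,0) ^ m (1,0) * X (1,1) ^ m (1,1)) := by
  rw [monomial_eq, Finsupp.prod_fintype _ _ (by simp)]
  simp [Fintype.prod_prod_type, Fin.prod_univ_two]

variable (k) in
abbrev detI : Ideal (MvPolynomial (Fin 2 × Fin 2) k) :=
  Ideal.span {(X (0, 0) : MvPolynomial (Fin 2 × Fin 2) k) * X (1, 1) - X (0, 1) * X (1, 0)}

variable (k) in
def theta : MvPolynomial (Fin 2 × Fin 2) k →ₐ[k] MvPolynomial (Fin 4) k :=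
  aeval (fun p => X (![0, 1] p.1) * X (![2, 3] p.2))

variable (k) in
def sig : MvPolynomial (Fin 4) k →ₗ[k] (MvPolynomial (Fin 2 × Fin 2) k ⧸ detI k) :=
  (basisMonomials (Fin 4) k).constr k (fun m => Ideal.Quotient.mk _
    (X (0,0) ^ min (m 0) (m 2) * X (0,1) ^ (m 0 - m 2) * (X (1,0) ^ (m 2 - m 0) *
      X (1,1) ^ (min (m 1) (m 3)))))

lemma sig_monomial (m : Fin 4 →₀ ℕ) : sig k (monomial m 1) = Ideal.Quotient.mk _
    (X (0,0) ^ min (m 0) (m 2) * X (0,1) ^ (m 0 - m 2) * (X (1,0) ^ (m 2 - m 0) *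
      X (1,1) ^ (min (m 1) (m 3)))) := by
  have := (basisMonomials (Fin 4) k).constr_basis k (fun m => Ideal.Quotient.mk (detI k)
    (X (0,0) ^ min (m 0) (m 2) * X (0,1) ^ (m 0 - m 2) * (X (1,0) ^ (m 2 - m 0) *
      X (1,1) ^ (min (m 1) (m 3))))) m
  rwa [coe_basisMonomials] at this

lemma rewr {A : Type*} [CommRing A] (a b c d : A) (h : a * d = b * c) (p q r u : ℕ) :
    a ^ (p + min q r) * b ^ (q - r) * (c ^ (r - q) * d ^ (u + min q r)) =
      a ^ p * b ^ q * (c ^ r * d ^ u) := by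
  rcases le_total q r with hqr | hqr
  · obtain ⟨n, rfl⟩ := Nat.exists_eq_add_of_le hqr
    have : a ^ q * d ^ q = b ^ q * c ^ q := by rw [← mul_pow, ← mul_pow, h]
    simp only [le_add_iff_nonneg_right, zero_le, inf_of_le_left, Nat.sub_eq_zero_of_le hqr,
      Nat.add_sub_cancel_left, pow_add, pow_zero]
    linear_combination a ^ p * c ^ n * d ^ u * this
  · obtain ⟨n, rfl⟩ := Nat.exists_eq_add_of_le hqr
    have : a ^ r * d ^ r = b ^ r * c ^ r := by rw [← mul_pow, ← mul_pow, h]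
    simp only [le_add_iff_nonneg_right, zero_le, inf_of_le_right, Nat.sub_eq_zero_of_le hqr,
      Nat.add_sub_cancel_left, pow_add, pow_zero]
    linear_combination a ^ p * b ^ n * d ^ u * this

lemma pow4_congr {A : Type*} [CommRing A] (a b c d : A) {p q r u p' q' r' u' : ℕ}
    (hp : p = p') (hq : q = q') (hr : r = r') (hu : u = u') :
    a ^ p * b ^ q * (c ^ r * d ^ u) = a ^ p' * b ^ q' * (c ^ r' * d ^ u') := by
  subst hp hq hr hu; rfl

lemma pow4_congr' {A : Type*} [CommRing A] (a b c d : A) {p q r u p' q' r' u' : ℕ}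
    (hp : p = p') (hq : q = q') (hr : r = r') (hu : u = u') :
    a ^ p * b ^ q * c ^ r * d ^ u = a ^ p' * b ^ q' * c ^ r' * d ^ u' := by
  subst hp hq hr hu; rfl

lemma theta_mon (p q r u : ℕ) :
    theta k (X (0,0) ^ p * X (0,1) ^ q * (X (1,0) ^ r * X (1,1) ^ u)) =
      X 0 ^ (p + q) * X 1 ^ (r + u) * X 2 ^ (p + r) * X 3 ^ (q + u) := by
  simp [theta]
  ring

lemma sig_theta (f : MvPolynomial (Fin 2 × Fin 2) k) :
    sig k (theta k f) = Ideal.Quotient.mk _ f := by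
  have : (sig k).comp (theta k).toLinearMap = (Ideal.Quotient.mkₐ k (detI k)).toLinearMap := by
    refine (basisMonomials (Fin 2 × Fin 2) k).ext fun m => ?_
    rw [coe_basisMonomials]
    simp only [LinearMap.comp_apply, AlgHom.toLinearMap_apply]
    rw [monA_eq, theta_mon, ← mon_eq, sig_monomial]
    simp only [Ideal.Quotient.mkₐ_eq_mk]
    simp only [map_mul, map_pow, Finsupp.equivFunOnFinite_symm_apply_apply]
    have h : Ideal.Quotient.mk (detI k) (X (0,0)) * Ideal.Quotient.mk (detI k) (X (1,1)) =
        Ideal.Quotient.mk (detI k) (X (0,1)) * Ideal.Quotient.mk (detI k) (X (1,0)) := by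
      rw [← map_mul, ← map_mul, Ideal.Quotient.eq]
      exact Ideal.subset_span rfl
    refine Eq.trans ?_ (rewr _ _ _ _ h _ _ _ _)
    refine pow4_congr _ _ _ _ ?_ ?_ ?_ ?_ <;> simp <;> omega
  exact congrArg (fun l => l f) this

lemma theta_W (f : MvPolynomial (Fin 2 × Fin 2) k) : W k 0 (theta k f) := by
  induction f using MvPolynomial.induction_on with
  | C a => simpa [theta, W] using isWeightedHomogeneous_C (R := k) wt a
  | add p q hp hq => rw [map_add]; exact hp.add hq
  | mul_X p i hp =>
    rw [map_mul]
    have : W k 0 (theta k (X i)) := by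
      simp only [theta, aeval_X]
      convert (W_X (k := k) _).mul (W_X (k := k) _) using 1
      obtain ⟨i, j⟩ := i
      fin_cases i <;> fin_cases j <;> simp [wt]
    simpa using hp.mul this

lemma theta_surj (f : MvPolynomial (Fin 4) k) (hf : W k 0 f) : ∃ g, theta k g = f := by
  change f ∈ (theta k).range
  rw [f.as_sum]
  refine sum_mem fun d hd => ?_
  have hd' := hf (mem_support_iff.1 hd)
  rw [weight_wt] at hd'
  refine ⟨C (coeff d f) * (X (0,0) ^ min (d 0) (d 2) * X (0,1) ^ (d 0 - d 2) *
    (X (1,0) ^ (d 2 - d 0) * X (1,1) ^ (min (d 1) (d 3)))), ?_⟩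
  change theta k _ = _
  rw [map_mul, theta_mon]
  have : (monomial d) (coeff d f) = C (coeff d f) * monomial d 1 := by rw [C_mul_monomial, mul_one]
  rw [this, mon_eq']
  congr! 1
  · simp [theta]
  · refine pow4_congr' _ _ _ _ ?_ ?_ ?_ ?_ <;> omega

lemma exists_model (R : Type) [CommRing R]
    (e : (MvPolynomial (Fin 2 × Fin 2) k ⧸ detI k) ≃+* R) :
    ∃ φ : R →+* MvPolynomial (Fin 4) k, Function.Injective φ ∧
      (∀ r, W k 0 (φ r)) ∧ (∀ f, W k 0 f → ∃ r, φ r = f) ∧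
      φ (e (Ideal.Quotient.mk _ (X (0, 0)))) = X 0 * X 2 ∧
      φ (e (Ideal.Quotient.mk _ (X (0, 1)))) = X 0 * X 3 ∧
      φ (e (Ideal.Quotient.mk _ (X (1, 0)))) = X 1 * X 2 ∧
      φ (e (Ideal.Quotient.mk _ (X (1, 1)))) = X 1 * X 3 := by
  have hI : ∀ a ∈ detI k, (theta k).toRingHom a = 0 := by
    intro a ha
    have : detI k ≤ RingHom.ker (theta k).toRingHom := by
      rw [Ideal.span_le, Set.singleton_subset_iff]
      change theta k _ = 0
      simp [theta]
      ring
    exact this ha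
  let ψ := Ideal.Quotient.lift (detI k) (theta k).toRingHom hI
  have hψ : ∀ f, ψ (Ideal.Quotient.mk _ f) = theta k f := fun f => Ideal.Quotient.lift_mk _ _ _
  refine ⟨ψ.comp e.symm.toRingHom, ?_, ?_, ?_, ?_⟩
  · refine Function.Injective.comp (g := ψ) ?_ e.symm.injective
    refine Function.LeftInverse.injective (g := sig k) fun z => ?_
    obtain ⟨f, rfl⟩ := Ideal.Quotient.mk_surjective z
    rw [hψ, sig_theta]
  · intro r
    obtain ⟨f, hf⟩ := Ideal.Quotient.mk_surjective (e.symm r)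
    change W k 0 (ψ (e.symm r))
    rw [← hf, hψ]
    exact theta_W f
  · intro f hf
    obtain ⟨g, hg⟩ := theta_surj f hf
    refine ⟨e (Ideal.Quotient.mk _ g), ?_⟩
    change ψ (e.symm (e _)) = _
    rw [e.symm_apply_apply, hψ, hg]
  · have : ∀ g, (ψ.comp e.symm.toRingHom) (e (Ideal.Quotient.mk _ g)) = theta k g := by
      intro g
      change ψ (e.symm (e _)) = _
      rw [e.symm_apply_apply, hψ]
    simp only [this]
    simp [theta]
end Model

noncomputable section Seq
variable {k : Type} [Field k]

local notation "s_" => (X 0 : MvPolynomial (Fin 4) k)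
local notation "t_" => (X 1 : MvPolynomial (Fin 4) k)
local notation "x_" => (X 2 : MvPolynomial (Fin 4) k)
local notation "y_" => (X 3 : MvPolynomial (Fin 4) k)

lemma Ws : W k 1 s_ := W_X 0
lemma Wt : W k 1 t_ := W_X 1
lemma Wx : W k (-1) x_ := W_X 2
lemma Wy : W k (-1) y_ := W_X 3

lemma W.cast {m n : ℤ} {f : MvPolynomial (Fin 4) k} (h : W k m f) (e : m = n) : W k n f := e ▸ h

lemma W.of_s {m : ℤ} {f : MvPolynomial (Fin 4) k} (h : W k m (s_ * f)) : W k (m - 1) f :=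
  h.of_X_mul
lemma W.of_x {m : ℤ} {f : MvPolynomial (Fin 4) k} (h : W k m (x_ * f)) : W k (m + 1) f :=
  h.of_X_mul.cast (by simp [wt])

lemma X_ndvd_pow {i j : Fin 4} (h : i ≠ j) (n : ℕ) :
    ¬ (X i : MvPolynomial (Fin 4) k) ∣ X j ^ n := fun hd =>
  h (X_dvd_X.1 ((X_prime (i := i)).dvd_of_dvd_pow hd))

/-- decomposition of elements of negative degree -/
lemma decomp_xy {m : ℤ} {p q : ℕ} (h : (p : ℤ) + q ≤ m + 1) {f : MvPolynomial (Fin 4) k}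
    (hf : W k (-m) f) : ∃ g g', W k (-m + p) g ∧ W k (-m + q) g' ∧ f = x_ ^ p * g + y_ ^ q * g' := by
  obtain ⟨g, g', hg, hg', rfl⟩ := W_decomp 2 3 p q (fun d hd => by omega) hf
  exact ⟨g, g', hg.cast (by simp [wt]), hg'.cast (by simp [wt]), rfl⟩

lemma decomp_st {f : MvPolynomial (Fin 4) k}
    (hf : W k 1 f) : ∃ g g', W k 0 g ∧ W k 0 g' ∧ f = s_ * g + t_ * g' := by
  obtain ⟨g, g', hg, hg', rfl⟩ := W_decomp 0 1 1 1 (fun d hd => by omega) hf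
  exact ⟨g, g', hg.cast (by simp [wt]), hg'.cast (by simp [wt]), by ring⟩

/-- the monomials `x^i y^(n-i)` generate degree `-n` -/
lemma decomp_pow (n : ℕ) {f : MvPolynomial (Fin 4) k} (hf : W k (-n) f) :
    ∃ ρ : ℕ → MvPolynomial (Fin 4) k, (∀ i, W k 0 (ρ i)) ∧
      f = ∑ i ∈ Finset.range (n + 1), ρ i * (x_ ^ i * y_ ^ (n - i)) := by
  induction n generalizing f with
  | zero => exact ⟨fun _ => f, fun _ => by simpa using hf, by simp⟩
  | succ n ih =>
    obtain ⟨g, g', hg, hg', rfl⟩ := decomp_xy (p := n + 1) (q := 1) (by push_cast; omega) hf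
    obtain ⟨ρ, hρ, hs⟩ := ih (f := g') (hg'.cast (by push_cast; ring))
    refine ⟨fun i => if i = n + 1 then g else ρ i, fun i => ?_, ?_⟩
    · dsimp only
      split_ifs
      · exact hg.cast (by push_cast; ring)
      · exact hρ i
    · rw [Finset.sum_range_succ, hs, Finset.mul_sum, add_comm]
      congr 1
      · refine Finset.sum_congr rfl fun i hi => ?_
        have hi := Finset.mem_range.1 hi
        dsimp only
        rw [if_neg (by omega), show n + 1 - i = (n - i) + 1 by omega]
        ring
      · simp [mul_comm]

lemma syz (n : ℕ) (ρ : ℕ → MvPolynomial (Fin 4) k) (hρ : ∀ i, W k 0 (ρ i))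
    (h : ∑ i ∈ Finset.range (n + 1), ρ i * (x_ ^ i * y_ ^ (n - i)) = 0) :
    ∃ U : ℕ → MvPolynomial (Fin 4) k, (∀ i, W k 1 (U i)) ∧ ρ 0 = x_ * U 0 ∧
      (∀ i < n, ρ (i + 1) = x_ * U (i + 1) - y_ * U i) ∧ U n = 0 := by
  induction n generalizing ρ with
  | zero =>
    refine ⟨0, fun _ => W.zero, ?_, by simp, rfl⟩
    simpa using h
  | succ n ih =>
    rw [Finset.sum_range_succ'] at h
    have hd : x_ ∣ y_ ^ (n + 1) * ρ 0 := by
      refine ⟨-∑ i ∈ Finset.range (n + 1), ρ (i+1) * (x_ ^ i * y_ ^ (n - i)), ?_⟩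
      rw [mul_neg, Finset.mul_sum, eq_neg_iff_add_eq_zero, ← h, add_comm]
      congr 1
      · refine Finset.sum_congr rfl fun i hi => ?_
        rw [Nat.add_sub_add_right]; ring
      · simp [mul_comm]
    obtain ⟨u, hu⟩ := ((X_prime (i := 2)).dvd_or_dvd hd).resolve_left (X_ndvd_pow (by decide) _)
    have hWu : W k 1 u := W.of_x (m := 0) (hu ▸ hρ 0)
    let ρ' : ℕ → MvPolynomial (Fin 4) k := fun i => if i = 0 then ρ 1 + y_ * u else ρ (i + 1)
    have hρ0 : ρ' 0 = ρ 1 + y_ * u := rfl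
    have hρ1 : ∀ i, ρ' (i + 1) = ρ (i + 2) := fun i => rfl
    have hW : ∀ i, W k 0 (ρ' i) := by
      rintro (_ | i)
      · rw [hρ0]; exact (hρ 1).add ((Wy.mul hWu).cast (by ring))
      · exact hρ _
    have hz : ∑ i ∈ Finset.range (n + 1), ρ' i * (x_ ^ i * y_ ^ (n - i)) = 0 := by
      have hz' : x_ * ∑ i ∈ Finset.range (n + 1), ρ' i * (x_ ^ i * y_ ^ (n - i)) = 0 := by
        rw [← h, Finset.sum_range_succ', Finset.sum_range_succ' _ n, mul_add, Finset.mul_sum,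
          add_assoc]
        refine congrArg₂ (· + ·) ?_ ?_
        · refine Finset.sum_congr rfl fun i hi => ?_
          rw [hρ1, Nat.add_sub_add_right n 1 (i + 1)]; ring
        · rw [hρ0, hu]; simp; ring
      exact (mul_eq_zero.1 hz').resolve_left (X_ne_zero 2)
    obtain ⟨U, hU, h0, hs, hl⟩ := ih ρ' hW hz
    refine ⟨fun i => if i = 0 then u else U (i - 1), fun i => ?_, ?_, ?_, ?_⟩
    · dsimp only
      split_ifs
      · exact hWu
      · exact hU _
    · simpa using hu
    · intro i hi
      obtain _ | i := i
      · simp only [zero_add, if_true, one_ne_zero, if_false, Nat.sub_self]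
        rw [← h0, hρ0]; ring
      · have := hs i (by omega)
        rw [hρ1] at this
        simpa using this
    · simpa using hl

lemma solve (n : ℕ) (m : ℤ) (hn : (n : ℤ) ≤ m + 1) (K : ℕ → MvPolynomial (Fin 4) k)
    (hK : ∀ i, W k (-(m + 1)) (K i)) :
    ∃ h : ℕ → MvPolynomial (Fin 4) k, (∀ i, W k (-m) (h i)) ∧
      ∀ j < n, x_ * h j - y_ * h (j + 1) = K j := by
  induction n with
  | zero => exact ⟨0, fun _ => W.zero, by simp⟩
  | succ n ih =>
    push_cast at hn
    obtain ⟨h, hh, hs⟩ := ih (by omega)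
    obtain ⟨A, B, hA, hB, hAB⟩ := decomp_xy (p := n + 1) (q := 1) (m := m + 1)
      (f := K n - x_ * h n) (by push_cast; omega)
      ((hK n).sub ((Wx.mul (hh n)).cast (by ring)))
    refine ⟨fun j => if j ≤ n then h j + x_ ^ j * y_ ^ (n - j) * A else -B, fun j => ?_, ?_⟩
    · dsimp only
      split_ifs with hj
      · refine (hh j).add ((((W_pow Wx j).mul (W_pow Wy (n - j))).mul hA).cast ?_)
        push_cast [Nat.cast_sub hj]; ring
      · exact hB.neg.cast (by push_cast; ring)
    · intro j hj
      rcases Nat.lt_succ_iff_lt_or_eq.1 hj with hj | rfl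
      · dsimp only
        rw [if_pos (by omega), if_pos (by omega), ← hs j hj,
          show n - j = (n - (j + 1)) + 1 by omega]
        ring
      · dsimp only
        rw [if_pos le_rfl, if_neg (by omega), Nat.sub_self]
        linear_combination -hAB
end Seq

noncomputable section Main
variable {k : Type} [Field k] {R : Type} [CommRing R]

/-- The embedding of the determinantal ring into `k[s,t,x,y]`. -/
structure DetModel (k R : Type) [Field k] [CommRing R] where
  φ : R →+* MvPolynomial (Fin 4) k
  inj : Function.Injective φ
  W0 : ∀ r, W k 0 (φ r)
  surj : ∀ f, W k 0 f → ∃ r, φ r = f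
  a : R
  b : R
  c : R
  d : R
  ha : φ a = X 0 * X 2
  hb : φ b = X 0 * X 3
  hc : φ c = X 1 * X 2
  hd : φ d = X 1 * X 3

local notation "s_" => (X 0 : MvPolynomial (Fin 4) k)
local notation "t_" => (X 1 : MvPolynomial (Fin 4) k)
local notation "x_" => (X 2 : MvPolynomial (Fin 4) k)
local notation "y_" => (X 3 : MvPolynomial (Fin 4) k)

namespace DetModel
variable (D : DetModel k R) (ℓ : ℕ)

/-- the ideal `p ^ ℓ` -/
def q : Ideal R := Ideal.span {D.b, D.a} ^ ℓ

lemma gen_mem {i : ℕ} (hi : i ≤ ℓ) : D.a ^ i * D.b ^ (ℓ - i) ∈ D.q ℓ := by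
  have h : D.q ℓ = Ideal.span {D.b, D.a} ^ i * Ideal.span {D.b, D.a} ^ (ℓ - i) := by
    rw [← pow_add, Nat.add_sub_cancel' hi, q]
  rw [h]
  exact Ideal.mul_mem_mul (Ideal.pow_mem_pow (Ideal.subset_span (by simp)) _)
    (Ideal.pow_mem_pow (Ideal.subset_span (by simp)) _)

lemma mem_q_dvd {r : R} (h : r ∈ D.q ℓ) : ∃ g, W k (-ℓ) g ∧ D.φ r = s_ ^ ℓ * g := by
  have h1 : Ideal.span {D.b, D.a} ≤ (Ideal.span {s_}).comap D.φ := by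
    rw [Ideal.span_le]
    rintro z (rfl | rfl)
    · rw [SetLike.mem_coe, Ideal.mem_comap, D.hb, Ideal.mem_span_singleton]; exact dvd_mul_right _ _
    · rw [SetLike.mem_coe, Ideal.mem_comap, D.ha, Ideal.mem_span_singleton]; exact dvd_mul_right _ _
  have h2 := (Ideal.pow_right_mono h1 ℓ).trans (Ideal.le_comap_pow D.φ ℓ) h
  rw [Ideal.mem_comap, Ideal.span_singleton_pow, Ideal.mem_span_singleton] at h2
  obtain ⟨g, hg⟩ := h2
  exact ⟨g, ((W.of_X_pow_mul ℓ (hg ▸ D.W0 r)).cast (by simp [wt])), hg⟩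

lemma φ_gen {i : ℕ} (hi : i ≤ ℓ) :
    D.φ (D.a ^ i * D.b ^ (ℓ - i)) = s_ ^ ℓ * (x_ ^ i * y_ ^ (ℓ - i)) := by
  obtain ⟨j, rfl⟩ := Nat.exists_eq_add_of_le hi
  rw [Nat.add_sub_cancel_left, map_mul, map_pow, map_pow, D.ha, D.hb]
  ring

lemma exists_sum {r : R} (h : ∃ g, D.φ r = s_ ^ ℓ * g) :
    ∃ v : ℕ → R, r = ∑ i ∈ Finset.range (ℓ + 1), v i * (D.a ^ i * D.b ^ (ℓ - i)) := by
  obtain ⟨g, hg⟩ := h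
  have hW : W k (-ℓ) g := ((W.of_X_pow_mul ℓ (hg ▸ D.W0 r)).cast (by simp [wt]))
  obtain ⟨ρ, hρ, rfl⟩ := decomp_pow ℓ hW
  choose v hv using fun i => D.surj _ (hρ i)
  refine ⟨v, D.inj ?_⟩
  rw [hg, map_sum, Finset.mul_sum]
  refine Finset.sum_congr rfl fun i hi => ?_
  rw [map_mul, hv, φ_gen D ℓ (by have := Finset.mem_range.1 hi; omega)]
  ring

lemma mem_q_of {r : R} (h : ∃ g, D.φ r = s_ ^ ℓ * g) : r ∈ D.q ℓ := by
  obtain ⟨v, rfl⟩ := D.exists_sum ℓ h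
  exact sum_mem fun i hi => Ideal.mul_mem_left _ _
    (D.gen_mem ℓ (by have := Finset.mem_range.1 hi; omega))

lemma exists_q {g : MvPolynomial (Fin 4) k} (hg : W k (-ℓ) g) :
    ∃ z : D.q ℓ, D.φ z = s_ ^ ℓ * g := by
  obtain ⟨r, hr⟩ := D.surj (s_ ^ ℓ * g) (((W_pow Ws ℓ).mul hg).cast (by ring))
  exact ⟨⟨r, D.mem_q_of ℓ ⟨g, hr⟩⟩, hr⟩

lemma det : D.a * D.d = D.b * D.c := D.inj (by
  rw [map_mul, map_mul, D.ha, D.hb, D.hc, D.hd]; ring)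

lemma isDomain (D : DetModel k R) : IsDomain R := by
  have := D.inj
  exact Function.Injective.isDomain D.φ this

/-- the endomorphism ring -/
lemma hom_q : Nonempty ((D.q ℓ →ₗ[R] D.q ℓ) ≃ₗ[R] R) := by
  have := D.isDomain
  have ha0 : D.a ≠ 0 := fun h => by
    have := D.ha
    rw [h, map_zero] at this
    exact mul_ne_zero (X_ne_zero 0) (X_ne_zero 2) this.symm
  have hA : D.a ^ ℓ ∈ D.q ℓ := by simpa using D.gen_mem ℓ (le_refl ℓ)
  have hB : D.b ^ ℓ ∈ D.q ℓ := by simpa using D.gen_mem ℓ (Nat.zero_le ℓ)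
  refine ⟨(LinearEquiv.ofBijective (LinearMap.lsmul R (D.q ℓ)) ⟨?_, ?_⟩).symm⟩
  · rw [← LinearMap.ker_eq_bot, LinearMap.ker_eq_bot']
    intro r hr
    have h := congrArg (fun f : D.q ℓ →ₗ[R] D.q ℓ => (f ⟨_, hA⟩ : R)) hr
    simp only [LinearMap.lsmul_apply, LinearMap.zero_apply, Submodule.coe_smul, smul_eq_mul,
      Submodule.coe_zero] at h
    exact (mul_eq_zero.1 h).resolve_right (pow_ne_zero _ ha0)
  · intro f
    have key : ∀ z : D.q ℓ, D.a ^ ℓ * (f z : R) = z * (f ⟨_, hA⟩ : R) := by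
      intro z
      have h1 : (D.a ^ ℓ) • z = (z : R) • (⟨_, hA⟩ : D.q ℓ) := Subtype.ext (mul_comm _ _)
      have h2 := congrArg f h1
      rw [map_smul, map_smul] at h2
      exact congrArg Subtype.val h2
    obtain ⟨g, hWg, hg⟩ := D.mem_q_dvd ℓ (f ⟨_, hA⟩).2
    have h3 := congrArg D.φ (key ⟨_, hB⟩)
    rw [map_mul, map_mul, hg, map_pow, map_pow, D.ha, D.hb] at h3
    have h4 : x_ ^ ℓ ∣ y_ ^ ℓ * (s_ ^ ℓ * g) := by
      refine ⟨D.φ (f ⟨_, hB⟩), ?_⟩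
      apply mul_left_cancel₀ (pow_ne_zero ℓ (X_ne_zero (R := k) (0 : Fin 4)))
      rw [mul_pow, mul_pow] at h3
      linear_combination -h3
    have h5 := (X_prime (i := (2 : Fin 4))).pow_dvd_of_dvd_mul_left ℓ
      (X_ndvd_pow (by decide) _) h4
    obtain ⟨u, rfl⟩ := (X_prime (i := (2 : Fin 4))).pow_dvd_of_dvd_mul_left ℓ
      (X_ndvd_pow (by decide) _) h5
    obtain ⟨r, hr⟩ := D.surj u ((W.of_X_pow_mul ℓ hWg).cast (by simp [wt]))
    refine ⟨r, ?_⟩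
    have h6 : (f ⟨_, hA⟩ : R) = r * D.a ^ ℓ := D.inj (by
      rw [hg, map_mul, hr, map_pow, D.ha]; ring)
    ext z
    have h7 := key z
    rw [h6] at h7
    apply mul_left_cancel₀ (pow_ne_zero ℓ ha0)
    rw [h7]
    simp only [LinearMap.lsmul_apply, Submodule.coe_smul, smul_eq_mul]
    ring

/-- the augmentation -/
def η : (Fin (ℓ + 1) → R) →ₗ[R] D.q ℓ :=
  Fintype.linearCombination R
    (fun i : Fin (ℓ + 1) => (⟨_, D.gen_mem ℓ (Nat.lt_succ_iff.1 i.2)⟩ : D.q ℓ))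

lemma η_apply (v : Fin (ℓ + 1) → R) :
    (D.η ℓ v : R) = ∑ i : Fin (ℓ + 1), v i * (D.a ^ (i : ℕ) * D.b ^ (ℓ - i)) := by
  simp [η, Fintype.linearCombination_apply]

lemma η_surj : Function.Surjective (D.η ℓ) := by
  intro z
  obtain ⟨g, -, hg⟩ := D.mem_q_dvd ℓ z.2
  obtain ⟨v, hv⟩ := D.exists_sum ℓ ⟨g, hg⟩
  refine ⟨fun i => v i, Subtype.ext ?_⟩
  rw [η_apply, hv, Finset.sum_range]

/-- extension by zero -/
def extz {ℓ : ℕ} (v : Fin ℓ → R × R) (i : ℕ) : R × R := if h : i < ℓ then v ⟨i, h⟩ else 0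

lemma extz_add {ℓ : ℕ} (v w : Fin ℓ → R × R) (i : ℕ) :
    extz (v + w) i = extz v i + extz w i := by
  unfold extz; split_ifs <;> simp

lemma extz_smul {ℓ : ℕ} (r : R) (v : Fin ℓ → R × R) (i : ℕ) :
    extz (r • v) i = r • extz v i := by
  unfold extz; split_ifs <;> simp

/-- the previous entry -/
def prev {ℓ : ℕ} (v : Fin ℓ → R × R) (i : ℕ) : R × R := if i = 0 then 0 else extz v (i - 1)

lemma prev_add {ℓ : ℕ} (v w : Fin ℓ → R × R) (i : ℕ) :
    prev (v + w) i = prev v i + prev w i := by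
  unfold prev; split_ifs <;> simp [extz_add]

lemma prev_smul {ℓ : ℕ} (r : R) (v : Fin ℓ → R × R) (i : ℕ) :
    prev (r • v) i = r • prev v i := by
  unfold prev; split_ifs <;> simp [extz_smul]

/-- first differential -/
def f0 : (Fin ℓ → R × R) →ₗ[R] (Fin (ℓ + 1) → R) where
  toFun v i := D.a * (extz v i).1 + D.c * (extz v i).2 - D.b * (prev v i).1 - D.d * (prev v i).2
  map_add' v w := by
    ext i; simp only [extz_add, prev_add, Pi.add_apply, Prod.fst_add, Prod.snd_add]; ring
  map_smul' r v := by
    ext i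
    simp only [extz_smul, prev_smul, Pi.smul_apply, Prod.smul_fst, Prod.smul_snd, smul_eq_mul,
      RingHom.id_apply]
    ring

/-- one block of the second differential -/
def blk : R × R →ₗ[R] R × R where
  toFun r := (D.c * r.1 + D.d * r.2, -(D.a * r.1 + D.b * r.2))
  map_add' v w := by ext <;> simp <;> ring
  map_smul' r v := by ext <;> simp <;> ring

/-- second differential -/
def f1 : (Fin ℓ → R × R) →ₗ[R] (Fin ℓ → R × R) := D.blk.compLeft (Fin ℓ)

lemma f1_apply (v : Fin ℓ → R × R) (j : Fin ℓ) : D.f1 ℓ v j =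
  (D.c * (v j).1 + D.d * (v j).2, -(D.a * (v j).1 + D.b * (v j).2)) := rfl

/-- the associated element of degree 1 -/
def u (r : R × R) : MvPolynomial (Fin 4) k := s_ * D.φ r.1 + t_ * D.φ r.2

lemma u_zero : D.u 0 = 0 := by simp [u]

lemma φ_f0 (v : Fin ℓ → R × R) (i : Fin (ℓ + 1)) :
    D.φ (D.f0 ℓ v i) = x_ * D.u (extz v i) - y_ * D.u (prev v i) := by
  simp only [f0, LinearMap.coe_mk, AddHom.coe_mk, map_add, map_sub, map_mul, D.ha, D.hb, D.hc,
    D.hd, u]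
  ring

lemma φ_η (v : Fin (ℓ + 1) → R) :
    D.φ (D.η ℓ v) = s_ ^ ℓ * ∑ i : Fin (ℓ + 1), D.φ (v i) * (x_ ^ (i : ℕ) * y_ ^ (ℓ - i)) := by
  rw [η_apply, map_sum, Finset.mul_sum]
  refine Finset.sum_congr rfl fun i _ => ?_
  rw [map_mul, φ_gen D ℓ (Nat.lt_succ_iff.1 i.2)]
  ring

lemma exact0 : Function.Exact (D.f0 ℓ) (D.η ℓ) := by
  intro v
  constructor
  · intro h
    have h1 := D.φ_η ℓ v
    rw [h, Submodule.coe_zero, map_zero] at h1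
    have h2 := (mul_eq_zero.1 h1.symm).resolve_left (pow_ne_zero _ (X_ne_zero _))
    let ρ : ℕ → MvPolynomial (Fin 4) k := fun i => if h : i < ℓ + 1 then D.φ (v ⟨i, h⟩) else 0
    have hρ : ∀ i : Fin (ℓ + 1), ρ i = D.φ (v i) := fun i => dif_pos i.2
    obtain ⟨U, hU, hU0, hUs, hUl⟩ := syz ℓ ρ (fun i => by
        dsimp only [ρ]
        split_ifs
        · exact D.W0 _
        · exact W.zero) (by
        rw [Finset.sum_range, ← h2]
        exact Finset.sum_congr rfl fun i _ => by rw [hρ])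
    choose g g' hg hg' hgg using fun i => decomp_st (hU i)
    choose r hr using fun i => D.surj _ (hg i)
    choose r' hr' using fun i => D.surj _ (hg' i)
    refine ⟨fun j => (r j, r' j), funext fun i => D.inj ?_⟩
    have hext : ∀ i, i ≤ ℓ → D.u (extz (fun j : Fin ℓ => (r j, r' j)) i) = U i := by
      intro i hi
      by_cases h : i < ℓ
      · simp [extz, h, u, hr, hr', ← hgg]
      · obtain rfl : i = ℓ := by omega
        simp [extz, u_zero, hUl]
    rw [φ_f0, ← hρ, hext i (by omega)]
    obtain ⟨i, hi⟩ := i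
    obtain _ | i := i
    · simp [prev, u_zero, hU0]
    · simp only [prev, Nat.add_eq_zero_iff, one_ne_zero, and_false, if_false, Nat.add_sub_cancel]
      rw [hext i (by omega), hUs i (by omega)]
  · rintro ⟨w, rfl⟩
    refine Subtype.ext (D.inj ?_)
    rw [φ_η, Submodule.coe_zero, map_zero]
    simp only [φ_f0]
    rw [mul_eq_zero]
    right
    simp only [sub_mul, Finset.sum_sub_distrib]
    rw [sub_eq_zero, Fin.sum_univ_castSucc, Fin.sum_univ_succ]
    have e1 : extz w ((Fin.last ℓ : Fin (ℓ + 1)) : ℕ) = 0 := by simp [extz]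
    have e2 : prev w ((0 : Fin (ℓ + 1)) : ℕ) = 0 := by simp [prev]
    rw [e1, e2, u_zero, mul_zero, mul_zero, zero_mul, zero_mul, add_zero, zero_add]
    refine Finset.sum_congr rfl fun i _ => ?_
    have e3 : prev w ((i.succ : Fin (ℓ + 1)) : ℕ) = extz w i := by simp [prev]
    rw [e3, Fin.val_castSucc, Fin.val_succ, show ℓ - (i : ℕ) = ℓ - (i + 1) + 1 by omega]
    ring

lemma u_eq_zero {r : R × R} (h : D.u r = 0) : ∃ z : R × R, D.blk z = r := by
  have h1 : s_ ∣ t_ * D.φ r.2 := ⟨-D.φ r.1, by unfold u at h; linear_combination h⟩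
  obtain ⟨w, hw⟩ := ((X_prime (i := (0 : Fin 4))).dvd_or_dvd h1).resolve_left
    (fun h => by simpa using X_dvd_X.1 h)
  have hWw : W k (-1) w := (W.of_s (hw ▸ D.W0 r.2)).cast (by ring)
  have hw1 : D.φ r.1 = -(t_ * w) := by
    apply mul_left_cancel₀ (X_ne_zero (R := k) (0 : Fin 4))
    unfold u at h
    rw [hw] at h
    linear_combination h
  obtain ⟨g, g', hg, hg', rfl⟩ := decomp_xy (m := 1) (p := 1) (q := 1) (by norm_num) hWw
  obtain ⟨z, hz⟩ := D.surj g (hg.cast (by norm_num))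
  obtain ⟨z', hz'⟩ := D.surj g' (hg'.cast (by norm_num))
  refine ⟨(-z, -z'), ?_⟩
  ext
  · apply D.inj
    simp only [blk, LinearMap.coe_mk, AddHom.coe_mk, map_add, map_mul, map_neg, D.hc, D.hd, hz,
      hz', hw1]
    ring
  · apply D.inj
    simp only [blk, LinearMap.coe_mk, AddHom.coe_mk, map_add, map_mul, map_neg, D.ha, D.hb, hz,
      hz', hw]
    ring

lemma u_blk (z : R × R) : D.u (D.blk z) = 0 := by
  simp only [u, blk, LinearMap.coe_mk, AddHom.coe_mk, map_add, map_mul, map_neg, D.ha, D.hb,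
    D.hc, D.hd]
  ring

lemma exact1 : Function.Exact (D.f1 ℓ) (D.f0 ℓ) := by
  intro v
  constructor
  · intro h
    have h1 : ∀ i, i ≤ ℓ → D.u (extz v i) = 0 := by
      intro i
      induction i with
      | zero =>
        intro _
        have := D.φ_f0 ℓ v 0
        rw [h] at this
        simpa [prev, u_zero] using this
      | succ i ih =>
        intro hi
        have := D.φ_f0 ℓ v ⟨i + 1, by omega⟩
        rw [h] at this
        simp only [Pi.zero_apply, map_zero, prev, Nat.add_eq_zero_iff, one_ne_zero, and_false,
          if_false, Nat.add_sub_cancel, ih (by omega), mul_zero, sub_zero] at this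
        exact (mul_eq_zero.1 this.symm).resolve_left (X_ne_zero _)
    have h2 : ∀ j : Fin ℓ, ∃ z, D.blk z = v j := by
      intro j
      apply D.u_eq_zero
      have := h1 j (by omega)
      simpa [extz] using this
    choose z hz using h2
    exact ⟨z, funext hz⟩
  · rintro ⟨w, rfl⟩
    have h1 : ∀ i, D.u (extz (D.f1 ℓ w) i) = 0 := by
      intro i
      unfold extz
      split_ifs
      · exact D.u_blk _
      · exact D.u_zero
    refine funext fun i => D.inj ?_
    rw [φ_f0, h1]
    have h2 : D.u (prev (D.f1 ℓ w) i) = 0 := by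
      unfold prev
      split_ifs
      · exact D.u_zero
      · exact h1 _
    rw [h2]; simp

end DetModel
end Main

noncomputable section Final
variable {k : Type} [Field k] {R : Type} [CommRing R]
namespace DetModel
variable (D : DetModel k R) (ℓ : ℕ)

local notation "s_" => (X 0 : MvPolynomial (Fin 4) k)
local notation "t_" => (X 1 : MvPolynomial (Fin 4) k)
local notation "x_" => (X 2 : MvPolynomial (Fin 4) k)
local notation "y_" => (X 3 : MvPolynomial (Fin 4) k)

lemma blk_apply (r : R × R) :
    D.blk r = (D.c * r.1 + D.d * r.2, -(D.a * r.1 + D.b * r.2)) := rfl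

lemma f1_single (j : Fin ℓ) (r : R × R) :
    D.f1 ℓ (Pi.single j r) = Pi.single j (D.blk r) := by
  ext i : 1
  by_cases h : i = j
  · subst h; simp [f1]
  · simp [f1, h]

lemma single_smul (j : Fin ℓ) (r r' : R) : (Pi.single j (r, r') : Fin ℓ → R × R) =
    r • (Pi.single j ((1 : R), (0 : R)) : Fin ℓ → R × R)
      + r' • (Pi.single j ((0 : R), (1 : R)) : Fin ℓ → R × R) := by
  rw [← Pi.single_smul, ← Pi.single_smul, ← Pi.single_add]
  simp

lemma f0_single (j : Fin ℓ) (r : R × R) :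
    D.f0 ℓ (Pi.single j r) = Pi.single j.castSucc (D.a * r.1 + D.c * r.2)
      - Pi.single j.succ (D.b * r.1 + D.d * r.2) := by
  have hex : ∀ i : ℕ, extz (Pi.single j r : Fin ℓ → R × R) i = if i = j then r else 0 := by
    intro i
    unfold extz
    by_cases h : i = j
    · subst h; simp
    · rw [if_neg h]
      split_ifs with h'
      · rw [Pi.single_eq_of_ne]
        intro he
        exact h (congrArg Fin.val he)
      · rfl
  have hpr : ∀ i : ℕ, prev (Pi.single j r : Fin ℓ → R × R) i = if i = j + 1 then r else 0 := by
    intro i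
    unfold prev
    obtain _ | i := i
    · simp
    · simp [hex]
  ext i
  simp only [f0, LinearMap.coe_mk, AddHom.coe_mk, hex, hpr, Pi.sub_apply, Pi.single_apply,
    Fin.ext_iff, Fin.val_castSucc, Fin.val_succ]
  split_ifs <;> (try simp) <;> (try ring)

lemma ext1 : Subsingleton (((Ext R (ModuleCat R) 1).obj
      (Opposite.op (ModuleCat.of R (D.q ℓ)))).obj (ModuleCat.of R (D.q ℓ))) := by
  refine ext_one_subsingleton (D.f0 ℓ) (D.f1 ℓ) (D.η ℓ) (D.exact1 ℓ) (D.exact0 ℓ) (D.η_surj ℓ) ?_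
  intro f hf
  have key : ∀ j : Fin ℓ, ∃ K, W k (-((ℓ : ℤ) + 1)) K ∧
      D.φ (f (Pi.single j (1, 0))) = s_ ^ ℓ * (s_ * K) ∧
      D.φ (f (Pi.single j (0, 1))) = s_ ^ ℓ * (t_ * K) := by
    intro j
    obtain ⟨F, hF, hF'⟩ := D.mem_q_dvd ℓ (f (Pi.single j (1, 0))).2
    obtain ⟨G, hG, hG'⟩ := D.mem_q_dvd ℓ (f (Pi.single j (0, 1))).2
    have h1 := congrArg (fun l => l (Pi.single j (1, 0))) hf
    simp only [LinearMap.comp_apply, LinearMap.zero_apply] at h1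
    rw [f1_single, blk_apply, single_smul, map_add, map_smul, map_smul] at h1
    have h2 := congrArg (fun z : D.q ℓ => D.φ z) h1
    simp only [Submodule.coe_add, Submodule.coe_smul, smul_eq_mul, Submodule.coe_zero, map_zero,
      map_add, map_mul, map_neg, hF', hG', map_one, D.ha, D.hb, D.hc, D.hd] at h2
    have h3 : t_ * F = s_ * G := by
      apply mul_left_cancel₀ (pow_ne_zero ℓ (X_ne_zero (R := k) (0 : Fin 4)))
      apply mul_left_cancel₀ (X_ne_zero (R := k) (2 : Fin 4))
      linear_combination h2
    obtain ⟨K, rfl⟩ := ((X_prime (i := (0 : Fin 4))).dvd_or_dvd ⟨G, h3⟩).resolve_left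
      (fun h => by simpa using X_dvd_X.1 h)
    have h4 : G = t_ * K := by
      apply mul_left_cancel₀ (X_ne_zero (R := k) (0 : Fin 4))
      linear_combination -h3
    subst h4
    exact ⟨K, hF.of_s.cast (by ring), hF', hG'⟩
  choose K hK hK1 hK2 using key
  let K' : ℕ → MvPolynomial (Fin 4) k := fun i => if h : i < ℓ then K ⟨i, h⟩ else 0
  have hK' : ∀ j : Fin ℓ, K' j = K j := fun j => dif_pos j.2
  obtain ⟨h, hW, hh⟩ := solve ℓ (ℓ : ℤ) (by omega) K' (fun i => by
    dsimp only [K']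
    split_ifs
    · exact hK _
    · exact W.zero)
  choose z hz using fun i => D.exists_q ℓ (hW i)
  let g : (Fin (ℓ + 1) → R) →ₗ[R] D.q ℓ := Fintype.linearCombination R (fun i => z i)
  have hg : ∀ i r, g (Pi.single i r) = r • z i := fun i r => by
    simp [g, Fintype.linearCombination_apply_single]
  refine ⟨g, ?_⟩
  have hgf : ∀ (j : Fin ℓ) (r : R × R), D.φ (g (D.f0 ℓ (Pi.single j r))) =
      s_ ^ ℓ * (D.u r * K j) := by
    intro j r
    rw [f0_single, map_sub, hg, hg]
    simp only [Submodule.coe_sub, Submodule.coe_smul, smul_eq_mul, map_sub, map_mul, map_add, hz,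
      D.ha, D.hb, D.hc, D.hd, Fin.val_castSucc, Fin.val_succ]
    rw [← hK' j, ← hh j j.2, u]
    ring
  refine LinearMap.pi_ext fun j r => ?_
  obtain ⟨r, r'⟩ := r
  refine Subtype.ext (D.inj ?_)
  rw [LinearMap.comp_apply, hgf, single_smul, map_add, map_smul, map_smul]
  simp only [Submodule.coe_add, Submodule.coe_smul, smul_eq_mul, map_add, map_mul, hK1, hK2, u]
  ring

lemma ext2 (hℓ : 1 ≤ ℓ) : ¬ Subsingleton (((Ext R (ModuleCat R) 2).obj
      (Opposite.op (ModuleCat.of R (D.q ℓ)))).obj (ModuleCat.of R (D.q ℓ))) := by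
  intro H
  obtain ⟨n, rfl⟩ : ∃ n, ℓ = n + 1 := ⟨ℓ - 1, by omega⟩
  obtain ⟨zA, hA⟩ := D.exists_q (n + 1) (g := x_ ^ n * x_)
    (((W_pow Wx n).mul Wx).cast (by push_cast; ring))
  obtain ⟨zB, hB⟩ := D.exists_q (n + 1) (g := x_ ^ n * y_)
    (((W_pow Wx n).mul Wy).cast (by push_cast; ring))
  let f : (Fin (n + 1) → R × R) →ₗ[R] D.q (n + 1) :=
    ((LinearMap.toSpanSingleton R _ zA).coprod (LinearMap.toSpanSingleton R _ zB)).comp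
      (LinearMap.proj 0)
  have hf : ∀ v, f v = (v 0).1 • zA + (v 0).2 • zB := fun v => rfl
  obtain ⟨g, hg⟩ := ext_two_factor (D.f0 (n + 1)) (D.f1 (n + 1)) (D.η (n + 1)) (D.exact1 _)
    (D.exact0 _) (D.η_surj _) H f (by
      intro v hv
      rw [LinearMap.mem_ker] at hv ⊢
      have h1 := congrArg (fun w => D.φ (w 0).1) hv
      simp only [f1_apply, Pi.zero_apply, Prod.fst_zero, map_zero, map_add, map_mul, D.hc,
        D.hd] at h1
      have h2 : x_ * D.φ (v 0).1 + y_ * D.φ (v 0).2 = 0 := by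
        apply mul_left_cancel₀ (X_ne_zero (R := k) (1 : Fin 4))
        linear_combination h1
      refine Subtype.ext (D.inj ?_)
      rw [hf]
      simp only [Submodule.coe_add, Submodule.coe_smul, smul_eq_mul, map_add, map_mul, hA, hB,
        Submodule.coe_zero, map_zero]
      linear_combination s_ ^ (n + 1) * x_ ^ n * h2)
  have h1 := congrArg (fun l => l (Pi.single 0 (1, 0))) hg
  simp only [LinearMap.comp_apply, hf] at h1
  rw [f1_single, blk_apply, single_smul, map_add, map_smul, map_smul] at h1
  obtain ⟨F, -, hF⟩ := D.mem_q_dvd (n + 1) (g (Pi.single 0 (1, 0))).2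
  obtain ⟨G, -, hG⟩ := D.mem_q_dvd (n + 1) (g (Pi.single 0 (0, 1))).2
  have h2 := congrArg (fun z : D.q (n + 1) => D.φ z) h1
  simp only [Submodule.coe_add, Submodule.coe_smul, smul_eq_mul, map_zero, Pi.single_eq_same,
      map_add, map_mul, map_neg, hF, hG, hA, hB, map_one, D.ha, D.hb, D.hc, D.hd] at h2
  have h3 : t_ * F - s_ * G = x_ ^ n := by
    apply mul_left_cancel₀ (pow_ne_zero (n + 1) (X_ne_zero (R := k) (0 : Fin 4)))
    apply mul_left_cancel₀ (X_ne_zero (R := k) (2 : Fin 4))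
    linear_combination h2
  have h4 := congrArg (MvPolynomial.eval (![0, 0, 1, 0] : Fin 4 → k)) h3
  simp at h4

end DetModel
end Final

open CategoryTheory MvPolynomial

/-- Over the determinantal ring `R = k[X₁₁,X₁₂,X₂₁,X₂₂]/(X₁₁X₂₂ − X₁₂X₂₁)` with
`p = (x₁₂, x₁₁)` and `ℓ ≥ 1`, the ideal `pˡ` is exactly 1-semidualizing:
`Hom_R(pˡ,pˡ) ≅ R`, `Ext¹_R(pˡ,pˡ) = 0`, and `Ext²_R(pˡ,pˡ) ≠ 0`. -/
theorem pow_p_exactly_one_semidualizing (k : Type) [Field k]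
    (R : Type) [CommRing R]
    (e : (MvPolynomial (Fin 2 × Fin 2) k ⧸
      Ideal.span {(X (0, 0) : MvPolynomial (Fin 2 × Fin 2) k) * X (1, 1)
        - X (0, 1) * X (1, 0)}) ≃+* R)
    (x11 x12 : R)
    (h11 : x11 = e (Ideal.Quotient.mk _ (X (0, 0))))
    (h12 : x12 = e (Ideal.Quotient.mk _ (X (0, 1))))
    (ℓ : ℕ) (hℓ : 1 ≤ ℓ)
    (q : Ideal R) (hq : q = Ideal.span {x12, x11} ^ ℓ) :
    Nonempty ((↥q →ₗ[R] ↥q) ≃ₗ[R] R) ∧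
    Subsingleton (((Ext R (ModuleCat R) 1).obj
      (Opposite.op (ModuleCat.of R ↥q))).obj (ModuleCat.of R ↥q)) ∧
    ¬ Subsingleton (((Ext R (ModuleCat R) 2).obj
      (Opposite.op (ModuleCat.of R ↥q))).obj (ModuleCat.of R ↥q)) := by
  obtain ⟨φ, hi, h0, hs, ha, hb, hc, hd⟩ := exists_model R e
  let D : DetModel k R := ⟨φ, hi, h0, hs, _, _, _, _, ha, hb, hc, hd⟩
  have hqD : q = D.q ℓ := by rw [hq, h11, h12]; rfl
  subst hqD
  exact ⟨D.hom_q ℓ, D.ext1 ℓ, D.ext2 ℓ hℓ⟩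
end

section
/- Let R be a commutative noetherian ring, C a finitely generated R-module with Supp_R(C) = Spec(R), and 0 → L → M → N → 0 a short exact sequence of R-modules. Suppose: the evaluation maps C ⊗_R Hom_R(C,M) → M and C ⊗_R Hom_R(C,N) → N are isomorphisms, Ext^i_R(C,M) = 0 for 0 < i ≤ m+1, Ext^i_R(C,N) = 0 for 0 < i ≤ m, Tor_i^R(C, Hom_R(C,M)) = 0 for 0 < i ≤ n, and Tor_i^R(C, Hom_R(C,N)) = 0 for 0 < i ≤ n+1. Then the evaluation map C ⊗_R Hom_R(C,L) → L is an isomorphism, Ext^i_R(C,L) = 0 for 0 < i ≤ m+1, and Tor_i^R(C, Hom_R(C,L)) = 0 for 0 < i ≤ n. -/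
open CategoryTheory
open scoped TensorProduct

/-- The evaluation map `ξ : C ⊗ Hom(C,M) → M`, `c ⊗ f ↦ f c`. -/
noncomputable def evalMap (R : Type) [CommRing R] (C M : Type) [AddCommGroup C] [Module R C]
    [AddCommGroup M] [Module R M] : C ⊗[R] (C →ₗ[R] M) →ₗ[R] M :=
  TensorProduct.lift ((LinearMap.id : (C →ₗ[R] M) →ₗ[R] (C →ₗ[R] M)).flip)


namespace BassAux
open MonoidalCategory

variable {R : Type} [CommRing R]

/-- vanishing of Tor through a resolution -/
lemma tor_iff (C X : ModuleCat.{0} R) (P : ProjectiveResolution X) (i : ℕ) :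
    Subsingleton (((Tor (ModuleCat R) (i + 1)).obj C).obj X) ↔
      Function.Exact ((P.complex.d (i + 2) (i + 1)).hom.lTensor C)
        ((P.complex.d (i + 1) i).hom.lTensor C) := by
  rw [← ModuleCat.isZero_iff_subsingleton]
  rw [show ((Tor (ModuleCat R) (i + 1)).obj C).obj X =
    (((tensoringLeft (ModuleCat R)).obj C).leftDerived (i + 1)).obj X from rfl]
  rw [(P.isoLeftDerivedObj ((tensoringLeft (ModuleCat R)).obj C) (i + 1)).isZero_iff]
  erw [← HomologicalComplex.exactAt_iff_isZero_homology]
  rw [HomologicalComplex.exactAt_iff' _ (i + 2) (i + 1) i (by simp) (by simp),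
    ShortComplex.ShortExact.moduleCat_exact_iff_function_exact]
  rfl

lemma ext_iff (C Y : ModuleCat.{0} R) (P : ProjectiveResolution C) (i : ℕ) :
    Subsingleton (((Ext R (ModuleCat R) (i + 1)).obj (Opposite.op C)).obj Y) ↔
      ∀ φ : P.complex.X (i + 1) ⟶ Y, P.complex.d (i + 2) (i + 1) ≫ φ = 0 →
        ∃ ψ : P.complex.X i ⟶ Y, P.complex.d (i + 1) i ≫ ψ = φ := by
  rw [← ModuleCat.isZero_iff_subsingleton, (P.isoExt (R := R) (i + 1) Y).isZero_iff,
    ← HomologicalComplex.exactAt_iff_isZero_homology,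
    HomologicalComplex.exactAt_iff' _ i (i + 1) (i + 2) (by simp) (by simp),
    ShortComplex.moduleCat_exact_iff]
  rfl

/-- the augmentation of a projective resolution -/
noncomputable def pi0 {X : ModuleCat.{0} R} (Q : ProjectiveResolution X) :
    Q.complex.X 0 ⟶ X := Q.π.f 0

lemma d_pi0 {X : ModuleCat.{0} R} (Q : ProjectiveResolution X) :
    Q.complex.d 1 0 ≫ pi0 Q = 0 := Q.complex_d_comp_π_f_zero

instance {X : ModuleCat.{0} R} (Q : ProjectiveResolution X) : Epi (pi0 Q) :=
  inferInstanceAs (Epi (Q.π.f 0))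

lemma exact_pi0 {X : ModuleCat.{0} R} (Q : ProjectiveResolution X) :
    (ShortComplex.mk _ _ (d_pi0 Q)).Exact :=
  ShortComplex.exact_of_g_is_cokernel _ Q.isColimitCokernelCofork

/-- splice a resolution of the kernel -/
noncomputable def splice (S : ShortComplex (ModuleCat.{0} R)) (hS : S.ShortExact)
    [Projective S.X₂] (Q : ProjectiveResolution S.X₁) : ProjectiveResolution S.X₃ where
  complex := Q.complex.augment (pi0 Q ≫ S.f) (by
    rw [← Category.assoc, d_pi0, Limits.zero_comp])
  projective n := by
    cases n
    · change Projective S.X₂; infer_instance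
    · exact Q.projective _
  π := (ChainComplex.toSingle₀Equiv _ _).symm ⟨S.g, by
    change (pi0 Q ≫ S.f) ≫ S.g = 0
    rw [Category.assoc, S.zero, Limits.comp_zero]⟩
  quasiIso := ⟨fun n => by
    have := hS.epi_g
    have := hS.mono_f
    cases n
    · rw [ChainComplex.quasiIsoAt₀_iff, ShortComplex.quasiIso_iff_of_zeros']
      · let T : ShortComplex (ModuleCat.{0} R) := ShortComplex.mk (pi0 Q ≫ S.f) S.g (by
          rw [Category.assoc, S.zero, Limits.comp_zero])
        have hT : T.Exact ∧ Epi T.g := by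
          refine ⟨?_, by dsimp [T]; infer_instance⟩
          let α : T ⟶ S := { τ₁ := pi0 Q, τ₂ := 𝟙 _, τ₃ := 𝟙 _ }
          have : Epi α.τ₁ := inferInstanceAs (Epi (pi0 Q))
          have : IsIso α.τ₂ := inferInstanceAs (IsIso (𝟙 _))
          have : Mono α.τ₃ := inferInstanceAs (Mono (𝟙 _))
          rw [ShortComplex.exact_iff_of_epi_of_isIso_of_mono α]
          exact hS.exact
        exact hT
      all_goals rfl
    · rename_i n
      rw [quasiIsoAt_iff_exactAt']
      · rw [HomologicalComplex.exactAt_iff' _ (n + 2) (n + 1) n (by simp) (by simp)]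
        cases n
        · let T : ShortComplex (ModuleCat.{0} R) :=
            ShortComplex.mk (Q.complex.d 1 0) (pi0 Q ≫ S.f) (by
              rw [← Category.assoc, d_pi0, Limits.zero_comp])
          have hT : T.Exact := by
            let α : ShortComplex.mk _ _ (d_pi0 Q) ⟶ T := { τ₁ := 𝟙 _, τ₂ := 𝟙 _, τ₃ := S.f }
            have : Epi α.τ₁ := inferInstanceAs (Epi (𝟙 _))
            have : IsIso α.τ₂ := inferInstanceAs (IsIso (𝟙 _))
            have : Mono α.τ₃ := inferInstanceAs (Mono S.f)
            rw [← ShortComplex.exact_iff_of_epi_of_isIso_of_mono α]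
            exact exact_pi0 Q
          exact hT
        · exact Q.exact_succ _
      · apply ChainComplex.exactAt_succ_single_obj⟩

variable {K F D : Type} [AddCommGroup K] [Module R K] [AddCommGroup F] [Module R F]
  [AddCommGroup D] [Module R D] (C : Type) [AddCommGroup C] [Module R C]

/-- Vanishing of Tor for unbundled modules. -/
def TorZ (R : Type) [CommRing R] (i : ℕ) (C D : Type) [AddCommGroup C] [Module R C]
    [AddCommGroup D] [Module R D] : Prop :=
  Subsingleton (((Tor (ModuleCat R) i).obj (ModuleCat.of R C)).obj (ModuleCat.of R D))

/-- short complex from modules -/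
def SC (u : K →ₗ[R] F) (v : F →ₗ[R] D) (h : Function.Exact u v) :
    ShortComplex (ModuleCat.{0} R) :=
  ShortComplex.mk (ModuleCat.ofHom u) (ModuleCat.ofHom v) (by
    ext x; exact h.apply_apply_eq_zero x)

lemma SC_shortExact (u : K →ₗ[R] F) (v : F →ₗ[R] D) (h : Function.Exact u v)
    (hu : Function.Injective u) (hv : Function.Surjective v) : (SC u v h).ShortExact where
  exact := (ShortComplex.ShortExact.moduleCat_exact_iff_function_exact _).mpr h
  mono_f := (ModuleCat.mono_iff_injective _).2 hu
  epi_g := (ModuleCat.epi_iff_surjective _).2 hv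

lemma tor_shift [Module.Projective R F] (u : K →ₗ[R] F) (v : F →ₗ[R] D) (h : Function.Exact u v)
    (hu : Function.Injective u) (hv : Function.Surjective v) (i : ℕ) :
    TorZ R (i + 2) C D ↔ TorZ R (i + 1) C K := by
  let Q := ProjectiveResolution.of (ModuleCat.of R K)
  have : Projective (SC u v h).X₂ := inferInstanceAs (Projective (ModuleCat.of R F))
  let P := splice (SC u v h) (SC_shortExact u v h hu hv) Q
  exact (tor_iff (ModuleCat.of R C) _ P (i + 1)).trans
    (tor_iff (ModuleCat.of R C) _ Q i).symm

lemma tor_one [Module.Projective R F] (u : K →ₗ[R] F) (v : F →ₗ[R] D) (h : Function.Exact u v)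
    (hu : Function.Injective u) (hv : Function.Surjective v) :
    TorZ R 1 C D ↔ Function.Injective (u.lTensor C) := by
  let Q := ProjectiveResolution.of (ModuleCat.of R K)
  have : Projective (SC u v h).X₂ := inferInstanceAs (Projective (ModuleCat.of R F))
  let P := splice (SC u v h) (SC_shortExact u v h hu hv) Q
  let p : Q.complex.X 0 →ₗ[R] K := (pi0 Q).hom
  have hp : Function.Surjective p := (ModuleCat.epi_iff_surjective _).1 inferInstance
  have hex : Function.Exact (Q.complex.d 1 0).hom p :=
    (ShortComplex.ShortExact.moduleCat_exact_iff_function_exact _).mp (exact_pi0 Q)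
  have h1 := lTensor_exact C hex hp
  have hs := LinearMap.lTensor_surjective C hp
  refine (tor_iff (ModuleCat.of R C) _ P 0).trans ?_
  change Function.Exact ((Q.complex.d 1 0).hom.lTensor C) ((u ∘ₗ p).lTensor C) ↔ _
  rw [LinearMap.lTensor_comp]
  constructor
  · intro H
    rw [injective_iff_map_eq_zero]
    intro x hx
    obtain ⟨y, rfl⟩ := hs x
    obtain ⟨z, rfl⟩ := (H y).1 hx
    exact h1.apply_apply_eq_zero z
  · intro H y
    rw [← h1 y]
    exact map_eq_zero_iff _ H

section modules
variable {A B : Type} [AddCommGroup A] [Module R A] [AddCommGroup B] [Module R B]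

lemma factor {X : Type} [AddCommGroup X] [Module R X] {f : A →ₗ[R] B} {g : B →ₗ[R] D}
    (hf : Function.Injective f)
    (h : Function.Exact f g) (t : X →ₗ[R] B) (ht : ∀ x, g (t x) = 0) :
    ∃ t' : X →ₗ[R] A, ∀ x, f (t' x) = t x := by
  let e := LinearEquiv.ofInjective f hf
  refine ⟨e.symm.toLinearMap ∘ₗ t.codRestrict (LinearMap.range f) (fun x => (h _).1 (ht x)), ?_⟩
  intro x
  exact congrArg Subtype.val (e.apply_symm_apply
    (t.codRestrict (LinearMap.range f) (fun x => (h _).1 (ht x)) x))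

lemma exact_ker (v : F →ₗ[R] D) : Function.Exact (LinearMap.ker v).subtype v := by
  intro x; simp

lemma comb_surj : Function.Surjective (Finsupp.linearCombination R (id : D → D)) :=
  Finsupp.linearCombination_id_surjective R D

lemma tor_inj {f : A →ₗ[R] B} {g : B →ₗ[R] D} (hf : Function.Injective f)
    (hg : Function.Surjective g) (h : Function.Exact f g) (hT : TorZ R 1 C D) :
    Function.Injective (f.lTensor C) := by
  let v := Finsupp.linearCombination R (id : D → D)
  have hι := (tor_one (K := LinearMap.ker v) C (LinearMap.ker v).subtype v (exact_ker v)
    (LinearMap.ker v).subtype_injective comb_surj).1 hT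
  obtain ⟨w, hw⟩ := Module.projective_lifting_property g v hg
  have hw' : ∀ x, g (w x) = v x := fun x => LinearMap.congr_fun hw x
  obtain ⟨u, hu⟩ := factor (X := LinearMap.ker v) hf h (w ∘ₗ (LinearMap.ker v).subtype) (fun x => by
    simp only [LinearMap.comp_apply, hw']; exact x.2)
  let α : LinearMap.ker v →ₗ[R] A × (D →₀ R) := u.prod (-(LinearMap.ker v).subtype)
  let β : A × (D →₀ R) →ₗ[R] B := f.coprod w
  have hβ : Function.Surjective β := by
    intro b
    obtain ⟨x, hx⟩ := comb_surj (R := R) (g b)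
    obtain ⟨a, ha⟩ := (h (b - w x)).1 (by rw [map_sub, hw', sub_eq_zero]; exact hx.symm)
    exact ⟨(a, x), by simp [β, ha]⟩
  have hαβ : Function.Exact α β := by
    rintro ⟨a, x⟩
    constructor
    · intro H
      have H' : f a + w x = 0 := by simpa [β] using H
      have hx : v x = 0 := by
        have := congrArg g H'
        rwa [map_add, hw', h.apply_apply_eq_zero, zero_add, map_zero] at this
      refine ⟨⟨-x, by simp [hx]⟩, ?_⟩
      have h2 : u ⟨-x, by simp [hx]⟩ = a := by
        apply hf
        rw [hu]
        simp only [LinearMap.comp_apply, Submodule.subtype_apply, map_neg]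
        exact (eq_neg_of_add_eq_zero_left H').symm
      simp [α, h2]
    · rintro ⟨k, hk⟩
      rw [← hk]
      simp [α, β, hu]
  have hex := lTensor_exact (M := LinearMap.ker v) (f := α) (g := β) C hαβ hβ
  rw [injective_iff_map_eq_zero]
  intro x hx
  have h1 : β.lTensor C ((LinearMap.inl R A (D →₀ R)).lTensor C x) = 0 := by
    rw [← LinearMap.comp_apply, ← LinearMap.lTensor_comp, show β ∘ₗ LinearMap.inl R A (D →₀ R) = f
      from LinearMap.coprod_inl _ _, hx]
  obtain ⟨z, hz⟩ := (hex _).1 h1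
  have h2 : (LinearMap.ker v).subtype.lTensor C z = 0 := by
    have := congrArg ((LinearMap.snd R A (D →₀ R)).lTensor C) hz
    rw [← LinearMap.comp_apply, ← LinearMap.lTensor_comp, ← LinearMap.comp_apply,
      ← LinearMap.lTensor_comp, LinearMap.snd_comp_inl, show LinearMap.snd R A (D →₀ R) ∘ₗ α =
        -(LinearMap.ker v).subtype from LinearMap.snd_prod _ _, LinearMap.lTensor_neg,
      LinearMap.lTensor_zero] at this
    simpa using this
  have h3 : z = 0 := (map_eq_zero_iff _ hι).1 h2
  rw [h3, map_zero] at hz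
  have := congrArg ((LinearMap.fst R A (D →₀ R)).lTensor C) hz
  rw [← LinearMap.comp_apply, ← LinearMap.lTensor_comp, LinearMap.fst_comp_inl,
    LinearMap.lTensor_id, map_zero] at this
  exact this.symm

end modules

lemma tor_les (i : ℕ) : ∀ (A B D : Type) [AddCommGroup A] [Module R A] [AddCommGroup B]
    [Module R B] [AddCommGroup D] [Module R D] (f : A →ₗ[R] B) (g : B →ₗ[R] D)
    (_ : Function.Injective f) (_ : Function.Surjective g) (_ : Function.Exact f g)
    (_ : TorZ R (i + 2) C D) (_ : TorZ R (i + 1) C B), TorZ R (i + 1) C A := by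
  induction i with
  | zero => ?_
  | succ i ih => ?_
  all_goals
    intro A B D _ _ _ _ _ _ f g hf hg h hTD hTB
    let v := Finsupp.linearCombination R (id : D → D)
    let pA := Finsupp.linearCombination R (id : A → A)
    obtain ⟨w, hw⟩ := Module.projective_lifting_property g v hg
    have hw' : ∀ x, g (w x) = v x := fun x => LinearMap.congr_fun hw x
    let pB : (A →₀ R) × (D →₀ R) →ₗ[R] B := (f ∘ₗ pA).coprod w
    have hpB : ∀ x y, pB (x, y) = f (pA x) + w y := fun x y => by simp [pB]
    have hpBs : Function.Surjective pB := by
      intro b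
      obtain ⟨x, hx⟩ := comb_surj (R := R) (g b)
      obtain ⟨a, ha⟩ := (h (b - w x)).1 (by rw [map_sub, hw', sub_eq_zero]; exact hx.symm)
      obtain ⟨y, rfl⟩ := comb_surj (R := R) a
      refine ⟨(y, x), ?_⟩
      rw [hpB]
      exact (congrArg (· + w x) ha).trans (sub_add_cancel _ _)
    let k : LinearMap.ker pA →ₗ[R] LinearMap.ker pB :=
      (LinearMap.inl R _ _).restrict (fun x hx => by
        have hx' : pA x = 0 := hx
        change pB (x, 0) = 0
        rw [hpB, hx']; simp)
    let l : LinearMap.ker pB →ₗ[R] LinearMap.ker v :=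
      (LinearMap.snd R _ _).restrict (by
        rintro ⟨x, y⟩ hxy
        have h0 : pB (x, y) = 0 := hxy
        rw [hpB] at h0
        have := congrArg g h0
        rwa [map_add, hw', h.apply_apply_eq_zero, zero_add, map_zero] at this)
    have hk : Function.Injective k := by
      intro x y hxy
      exact Subtype.ext (congrArg (fun z => z.1.1) hxy)
    have hl : Function.Surjective l := by
      rintro ⟨y, hy⟩
      have hy' : v y = 0 := hy
      obtain ⟨a, ha⟩ := (h (- w y)).1 (by rw [map_neg, hw', hy', neg_zero])
      obtain ⟨x, rfl⟩ := comb_surj (R := R) a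
      refine ⟨⟨(x, y), ?_⟩, rfl⟩
      change pB (x, y) = 0
      rw [hpB]
      exact (congrArg (· + w y) ha).trans (neg_add_cancel _)
    have hkl : Function.Exact k l := by
      rintro ⟨⟨x, y⟩, hxy⟩
      constructor
      · intro H
        have hy : y = 0 := congrArg Subtype.val H
        subst hy
        have h0 : pB (x, 0) = 0 := hxy
        rw [hpB, map_zero, add_zero] at h0
        exact ⟨⟨x, (map_eq_zero_iff _ hf).1 h0⟩, rfl⟩
      · rintro ⟨z, hz⟩
        rw [← hz]
        rfl
  · have h1 : TorZ R 1 C (LinearMap.ker v) := (tor_shift C _ v (exact_ker v)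
      (Submodule.subtype_injective _) comb_surj 0).1 hTD
    have h2 := tor_inj (A := LinearMap.ker pA) (B := LinearMap.ker pB)
      (D := LinearMap.ker v) (f := k) (g := l) C hk hl hkl h1
    have h3 := (tor_one C _ pB (exact_ker pB) (Submodule.subtype_injective _) hpBs).1 hTB
    refine (tor_one C _ pA (exact_ker pA) (Submodule.subtype_injective _) comb_surj).2 ?_
    have h4 : Function.Injective (((LinearMap.inl R (A →₀ R) (D →₀ R)) ∘ₗ
        (LinearMap.ker pA).subtype).lTensor C) := by
      have : (LinearMap.inl R (A →₀ R) (D →₀ R)) ∘ₗ (LinearMap.ker pA).subtype =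
        (LinearMap.ker pB).subtype ∘ₗ k := rfl
      rw [this, LinearMap.lTensor_comp]
      exact h3.comp h2
    rw [LinearMap.lTensor_comp] at h4
    exact Function.Injective.of_comp h4
  · have h1 := (tor_shift C _ v (exact_ker v)
      (Submodule.subtype_injective _) comb_surj (i + 1)).1 hTD
    have h2 := (tor_shift C _ pB (exact_ker pB)
      (Submodule.subtype_injective _) hpBs i).1 hTB
    exact (tor_shift C _ pA (exact_ker pA)
      (Submodule.subtype_injective _) comb_surj i).2 (ih _ _ _ k l hk hl hkl h1 h2)

lemma tensor_zero [IsNoetherianRing R] [Module.Finite R C]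
    (hsupp : Module.support R C = Set.univ) (X : Type) [AddCommGroup X] [Module R X]
    (hX : Subsingleton (C ⊗[R] X)) : Subsingleton X := by
  refine subsingleton_of_forall_eq 0 fun x => CharacterModule.eq_zero_of_character_apply
    fun c => ?_
  by_contra hc
  have hs : Subsingleton (C →ₗ[R] CharacterModule X) := by
    refine (CharacterModule.homEquiv (R := R) (A := C) (B := X)).toEquiv.subsingleton_congr.2 ?_
    refine ⟨fun a b => ?_⟩
    ext z
    rw [Subsingleton.elim z 0]
    exact (map_zero a).trans (map_zero b).symm
  let Y : Submodule R (CharacterModule X) := Submodule.span R {c}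
  have hs' : Subsingleton (C →ₗ[R] Y) := by
    refine ⟨fun a b => ?_⟩
    have := Subsingleton.elim (Y.subtype ∘ₗ a) (Y.subtype ∘ₗ b)
    ext z : 1
    exact Subtype.ext (LinearMap.congr_fun this z)
  obtain ⟨r, hr, hreg⟩ := IsSMulRegular.subsingleton_linearMap_iff.1 hs'
  have hn : IsNilpotent r := by
    rw [← mem_nilradical, nilradical_eq_sInf, Ideal.mem_sInf]
    intro p hp
    have : (⟨p, hp⟩ : PrimeSpectrum R) ∈ Module.support R C := by rw [hsupp]; trivial
    exact Module.mem_support_iff_of_finite.1 this hr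
  obtain ⟨k, hk⟩ := hn
  have hregk := hreg.pow k
  rw [hk] at hregk
  have h0 : (⟨c, Submodule.mem_span_singleton_self c⟩ : Y) = 0 :=
    hregk (by simp)
  apply hc
  have h1 : c = 0 := congrArg Subtype.val h0
  rw [h1]; rfl

/-- Ext vanishing -/
def ExtZ (R : Type) [CommRing R] (i : ℕ) (C D : Type) [AddCommGroup C] [Module R C]
    [AddCommGroup D] [Module R D] : Prop :=
  Subsingleton (((Ext R (ModuleCat R) i).obj (Opposite.op (ModuleCat.of R C))).obj
    (ModuleCat.of R D))

lemma ext_les {L M N : Type} [AddCommGroup L] [Module R L] [AddCommGroup M] [Module R M]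
    [AddCommGroup N] [Module R N]
    (f : L →ₗ[R] M) (g : M →ₗ[R] N)
    (hf : Function.Injective f) (hg : Function.Surjective g) (hfg : Function.Exact f g)
    (hs : ∀ t : C →ₗ[R] N, ∃ s : C →ₗ[R] M, g ∘ₗ s = t) (i : ℕ)
    (hM : ExtZ R (i + 1) C M) (hN : 0 < i → ExtZ R i C N) : ExtZ R (i + 1) C L := by
  let P := ProjectiveResolution.of (ModuleCat.of R C)
  have hM' := (ext_iff _ _ P i).1 hM
  refine (ext_iff _ _ P i).2 fun φ hφ => ?_
  let f' : ModuleCat.of R L ⟶ ModuleCat.of R M := ModuleCat.ofHom f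
  let g' : ModuleCat.of R M ⟶ ModuleCat.of R N := ModuleCat.ofHom g
  have : Mono f' := (ModuleCat.mono_iff_injective _).2 hf
  have : Epi g' := (ModuleCat.epi_iff_surjective _).2 hg
  have hfg0 : f' ≫ g' = 0 := by ext x; exact hfg.apply_apply_eq_zero x
  obtain ⟨ψ, hψ⟩ := hM' (φ ≫ f') (by rw [← Category.assoc, hφ, Limits.zero_comp])
  have hgψ : P.complex.d (i + 1) i ≫ (ψ ≫ g') = 0 := by
    rw [← Category.assoc, hψ, Category.assoc, hfg0, Limits.comp_zero]
  obtain ⟨θ, hθ1, hθ2⟩ : ∃ θ : P.complex.X i ⟶ ModuleCat.of R M, θ ≫ g' = ψ ≫ g' ∧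
      P.complex.d (i + 1) i ≫ θ = 0 := by
    cases i with
    | zero =>
      have he : Epi (pi0 P) := inferInstance
      have hex := exact_pi0 P
      let t : ModuleCat.of R C ⟶ ModuleCat.of R N := hex.desc (ψ ≫ g') hgψ
      have ht : pi0 P ≫ t = ψ ≫ g' := hex.g_desc (ψ ≫ g') hgψ
      obtain ⟨s, hs⟩ := hs t.hom
      refine ⟨pi0 P ≫ ModuleCat.ofHom s, ?_, ?_⟩
      · rw [← ht, Category.assoc]
        congr 1
        ext x
        exact LinearMap.congr_fun hs x
      · rw [← Category.assoc, d_pi0, Limits.zero_comp]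
    | succ i =>
      obtain ⟨χ, hχ⟩ := (ext_iff _ _ P i).1 (hN (Nat.succ_pos _)) _ hgψ
      refine ⟨P.complex.d (i + 1) i ≫ Projective.factorThru χ g', ?_, ?_⟩
      · rw [Category.assoc, Projective.factorThru_comp, hχ]
      · rw [← Category.assoc, HomologicalComplex.d_comp_d, Limits.zero_comp]
  obtain ⟨η, hη⟩ := factor hf hfg (ψ - θ).hom (fun x => by
    have h0 : (ψ - θ) ≫ g' = 0 := by rw [Preadditive.sub_comp, hθ1, sub_self]
    exact LinearMap.congr_fun (congrArg ModuleCat.Hom.hom h0) x)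
  refine ⟨ModuleCat.ofHom η, ?_⟩
  rw [← cancel_mono f', Category.assoc]
  have h5 : ModuleCat.ofHom η ≫ f' = ψ - θ := by ext x; exact hη x
  erw [h5]
  rw [Preadditive.comp_sub, hψ, hθ2, sub_zero]

end BassAux

/-- Bass class two-of-three lemma for a short exact sequence `0 → L → M → N → 0`. -/
theorem bass_class_two_of_three
    (R : Type) [CommRing R] [IsNoetherianRing R]
    (C : Type) [AddCommGroup C] [Module R C] [Module.Finite R C]
    (hsupp : Module.support R C = Set.univ)
    (L M N : Type) [AddCommGroup L] [Module R L] [AddCommGroup M] [Module R M]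
    [AddCommGroup N] [Module R N]
    (f : L →ₗ[R] M) (g : M →ₗ[R] N)
    (hf : Function.Injective f) (hg : Function.Surjective g) (hfg : Function.Exact f g)
    (m n : ℕ)
    (hevM : Function.Bijective (evalMap R C M))
    (hevN : Function.Bijective (evalMap R C N))
    (hextM : ∀ i : ℕ, 0 < i → i ≤ m + 1 →
      Subsingleton (((Ext R (ModuleCat R) i).obj
        (Opposite.op (ModuleCat.of R C))).obj (ModuleCat.of R M)))
    (hextN : ∀ i : ℕ, 0 < i → i ≤ m →
      Subsingleton (((Ext R (ModuleCat R) i).obj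
        (Opposite.op (ModuleCat.of R C))).obj (ModuleCat.of R N)))
    (htorM : ∀ i : ℕ, 0 < i → i ≤ n →
      Subsingleton (((Tor (ModuleCat R) i).obj
        (ModuleCat.of R C)).obj (ModuleCat.of R (C →ₗ[R] M))))
    (htorN : ∀ i : ℕ, 0 < i → i ≤ n + 1 →
      Subsingleton (((Tor (ModuleCat R) i).obj
        (ModuleCat.of R C)).obj (ModuleCat.of R (C →ₗ[R] N)))) :
    Function.Bijective (evalMap R C L) ∧
    (∀ i : ℕ, 0 < i → i ≤ m + 1 →
      Subsingleton (((Ext R (ModuleCat R) i).obj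
        (Opposite.op (ModuleCat.of R C))).obj (ModuleCat.of R L))) ∧
    (∀ i : ℕ, 0 < i → i ≤ n →
      Subsingleton (((Tor (ModuleCat R) i).obj
        (ModuleCat.of R C)).obj (ModuleCat.of R (C →ₗ[R] L)))) := by
  let fs : (C →ₗ[R] L) →ₗ[R] (C →ₗ[R] M) := f.compRight R
  let gs : (C →ₗ[R] M) →ₗ[R] (C →ₗ[R] N) := g.compRight R
  have natf : ∀ x, evalMap R C M (fs.lTensor C x) = f (evalMap R C L x) := by
    intro x
    induction x with
    | zero => simp
    | add x y hx hy => simp only [map_add, hx, hy]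
    | tmul c h => simp [evalMap, fs]
  have natg : ∀ x, evalMap R C N (gs.lTensor C x) = g (evalMap R C M x) := by
    intro x
    induction x with
    | zero => simp
    | add x y hx hy => simp only [map_add, hx, hy]
    | tmul c h => simp [evalMap, gs]
  have hgsT : Function.Surjective (gs.lTensor C) := by
    intro y
    obtain ⟨z, hz⟩ := hg (evalMap R C N y)
    obtain ⟨x, rfl⟩ := hevM.2 z
    exact ⟨x, hevN.1 (by rw [natg, hz])⟩
  have hgs : Function.Surjective gs := by
    have hq : Function.Exact gs (LinearMap.range gs).mkQ := fun x => by
      rw [← LinearMap.mem_ker, Submodule.ker_mkQ]; rfl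
    have hqs := Submodule.mkQ_surjective (LinearMap.range gs)
    have hex := lTensor_exact C hq hqs
    have hX : Subsingleton (C ⊗[R] ((C →ₗ[R] N) ⧸ LinearMap.range gs)) := by
      refine subsingleton_of_forall_eq 0 fun z => ?_
      obtain ⟨y, rfl⟩ := LinearMap.lTensor_surjective C hqs z
      exact (hex y).2 (hgsT y)
    have := BassAux.tensor_zero C hsupp _ hX
    rw [Submodule.Quotient.subsingleton_iff] at this
    exact LinearMap.range_eq_top.1 this
  have hfs : Function.Injective fs := by
    intro a b hab
    ext c
    exact hf (LinearMap.congr_fun hab c)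
  have hfgs : Function.Exact fs gs := by
    intro t
    constructor
    · intro ht
      obtain ⟨s, hs⟩ := BassAux.factor hf hfg t (fun c => LinearMap.congr_fun ht c)
      exact ⟨s, LinearMap.ext hs⟩
    · rintro ⟨s, rfl⟩
      ext c
      exact hfg.apply_apply_eq_zero _
  refine ⟨⟨?_, ?_⟩, ?_, ?_⟩
  · have h1 : Function.Injective (fs.lTensor C) :=
      BassAux.tor_inj C hfs hgs hfgs (htorN 1 one_pos (by omega))
    have h2 := hevM.1.comp h1
    refine Function.Injective.of_comp (f := f) ?_
    convert h2 using 1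
    funext x
    exact (natf x).symm
  · intro l
    obtain ⟨y, hy⟩ := hevM.2 (f l)
    have h0 : gs.lTensor C y = 0 := hevN.1 (by
      rw [natg, hy, hfg.apply_apply_eq_zero, map_zero])
    obtain ⟨x, rfl⟩ := (lTensor_exact C hfgs hgs y).1 h0
    exact ⟨x, hf (by rw [← natf, hy])⟩
  · intro i hi him
    obtain ⟨j, rfl⟩ := Nat.exists_eq_succ_of_ne_zero hi.ne'
    exact BassAux.ext_les C f g hf hg hfg (fun t => hgs t) j (hextM _ hi him)
      (fun hj => hextN j hj (by omega))
  · intro i hi hin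
    obtain ⟨j, rfl⟩ := Nat.exists_eq_succ_of_ne_zero hi.ne'
    exact BassAux.tor_les C j _ _ _ fs gs hfs hgs hfgs (htorN _ (by omega) (by omega))
      (htorM _ hi hin)
end
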